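/- arXiv:1608.04666 — 11 statements merged into one kernel-verified Lean document; each statement's English description precedes it below -/
import Mathlib

section
/- Let F be a field, n a positive integer, and A an n×n matrix over F. Then A is a product of two nilpotent n×n matrices over F if and only if A is singular, except when n = 2 and A is a nonzero nilpotent matrix. Precisely: A can be written as A = N₁N₂ with N₁, N₂ nilpotent n×n matrices if and only if A is not invertible and it is not the case that n = 2, A is nilpotent, and A ≠ 0. -/
/-!
If `V = P ⊕ W` and `g = l * u` is a product of two nilpotents on `W`, then multiplying
`[[X₁, 0], [X₂, l]]` by `[[Y₁, Y₂], [0, u]]` turns any factorization of the remaining blocks by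
nilpotent borders into a factorization on `V`.

When `ker f ⊄ range f`, the map `f` is the direct sum of `0` on a line and an endomorphism `g` of a
hyperplane `W`. The border contributes an arbitrary rank-one map to the `W`-block, and subtracting
a suitable one from `g` yields an endomorphism of `W` whose kernel is again not contained in its
range: induct on the dimension.

When `ker f ⊆ range f` and `f` has rank at least two, a two-dimensional border carrying a nilpotent
Jordan block reduces `f` to the first case. Otherwise `ker f = range f` is a line, that is, `f` is a
nonzero nilpotent of a plane. If such an `f` were `l * u` with `l` and `u` nilpotent, then
`range u = ker u = ker f = range f = range l = ker l`, hence `f = 0`, a contradiction.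
-/

open LinearMap

/-- The property of being a product of two nilpotent elements, stated in an arbitrary monoid with
zero so that it can be transported between matrices and endomorphisms. -/
def IsNilpotentProduct {R : Type*} [MonoidWithZero R] (a : R) : Prop :=
  ∃ l u : R, IsNilpotent l ∧ IsNilpotent u ∧ a = l * u

theorem IsNilpotentProduct.map {R S E : Type*} [MonoidWithZero R] [MonoidWithZero S]
    [FunLike E R S] [MonoidWithZeroHomClass E R S] {a : R} (ha : IsNilpotentProduct a) (e : E) :
    IsNilpotentProduct (e a) := by
  obtain ⟨l, u, hl, hu, rfl⟩ := ha
  exact ⟨e l, e u, hl.map e, hu.map e, map_mul e l u⟩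

theorem isNilpotentProduct_map_equiv_iff {R S : Type*} [MonoidWithZero R] [MonoidWithZero S]
    (e : R ≃* S) {a : R} : IsNilpotentProduct (e a) ↔ IsNilpotentProduct a :=
  ⟨fun h => by simpa using h.map e.symm, fun h => h.map e⟩

theorem IsNilpotentProduct.not_isUnit {R : Type*} [MonoidWithZero R] [Nontrivial R] {a : R}
    (ha : IsNilpotentProduct a) : ¬IsUnit a := by
  obtain ⟨l, u, ⟨n, hn⟩, -, rfl⟩ := ha
  intro h
  obtain ⟨b, hb⟩ := h.exists_right_inv
  have hpow : l ^ n * (u * b) ^ n = 1 := pow_mul_pow_eq_one n (by rw [← mul_assoc, hb])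
  rw [hn, zero_mul] at hpow
  exact zero_ne_one hpow

theorem isNilpotent_add_of_mul_eq_zero {R : Type*} [Semiring R] {a b : R} (ha : IsNilpotent a)
    (hb : IsNilpotent b) (hab : a * b = 0) : IsNilpotent (a + b) := by
  have mul_add_pow (n : ℕ) : a * (a + b) ^ n = a ^ (n + 1) := by
    induction n with
    | zero => simp
    | succ n ih => rw [pow_succ, ← mul_assoc, ih, mul_add, pow_succ a n, mul_assoc _ a b, hab,
        mul_zero, add_zero, ← pow_succ, ← pow_succ]
  have add_pow_mul (m : ℕ) : (a + b) ^ m * b = b ^ (m + 1) := by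
    induction m with
    | zero => simp
    | succ m ih => rw [pow_succ', mul_assoc, ih, add_mul, pow_succ' b m, ← mul_assoc a, hab,
        zero_mul, zero_add, ← pow_succ', ← pow_succ']
  obtain ⟨n, hn⟩ := ha
  obtain ⟨m, hm⟩ := hb
  refine ⟨m + 1 + n, ?_⟩
  calc (a + b) ^ (m + 1 + n)
      = (a + b) ^ m * (a * (a + b) ^ n) + (a + b) ^ m * b * (a + b) ^ n := by
        rw [pow_add, pow_succ, mul_add, add_mul, mul_assoc _ a]
    _ = 0 := by
        rw [mul_add_pow, add_pow_mul, pow_succ, pow_succ, hn, hm]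
        simp

theorem isNilpotent_smulRight {R M : Type*} [CommSemiring R] [AddCommMonoid M] [Module R M]
    {φ : Module.Dual R M} {v : M} (h : φ v = 0) :
    IsNilpotent (φ.smulRight v : Module.End R M) :=
  ⟨2, by ext; simp [pow_two, h]⟩

section Retract

variable {R V W : Type*} [Semiring R] [AddCommMonoid V] [Module R V] [AddCommMonoid W] [Module R W]
  {i : W →ₗ[R] V} {p : V →ₗ[R] W}

theorem isNilpotent_comp_comp_of_comp_eq_id (hpi : p ∘ₗ i = .id) {g : Module.End R W}
    (hg : IsNilpotent g) : IsNilpotent (i ∘ₗ g ∘ₗ p : Module.End R V) := by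
  have comp_pow (n : ℕ) :
      (i ∘ₗ g ∘ₗ p : Module.End R V) ^ (n + 1) = i ∘ₗ (g ^ (n + 1)) ∘ₗ p := by
    induction n with
    | zero => simp
    | succ n ih =>
      rw [pow_succ', ih, pow_succ' g (n + 1)]
      ext x
      simp [← comp_apply p i, hpi]
  obtain ⟨n, hn⟩ := hg
  exact ⟨n + 1, by rw [comp_pow, pow_succ, hn]; simp⟩

theorem IsNilpotentProduct.mul_add_comp_comp (hpi : p ∘ₗ i = .id) {g : Module.End R W}
    (hg : IsNilpotentProduct g) {X Y : Module.End R V} (hX : IsNilpotent X) (hY : IsNilpotent Y)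
    (hXi : X ∘ₗ i = 0) (hpY : p ∘ₗ Y = 0) : IsNilpotentProduct (X * Y + i ∘ₗ g ∘ₗ p) := by
  obtain ⟨l, u, hl, hu, rfl⟩ := hg
  have hXi (w : W) : X (i w) = 0 := congr($hXi w)
  have hpY (x : V) : p (Y x) = 0 := congr($hpY x)
  have hpi' (w : W) : p (i w) = w := congr($hpi w)
  refine ⟨X + i ∘ₗ l ∘ₗ p, i ∘ₗ u ∘ₗ p + Y, ?_, ?_, ?_⟩
  · exact isNilpotent_add_of_mul_eq_zero hX (isNilpotent_comp_comp_of_comp_eq_id hpi hl)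
      (by ext; simp [hXi])
  · exact isNilpotent_add_of_mul_eq_zero (isNilpotent_comp_comp_of_comp_eq_id hpi hu) hY
      (by ext; simp [hpY])
  · ext x
    simp [hXi, hpY, hpi', add_comm]

end Retract

theorem exists_dual_eq_one_and_ne_zero {F V : Type*} [Semifield F] [AddCommMonoid V] [Module F V]
    [Module.Projective F V] {v w : V} (hv : v ≠ 0) (hw : w ≠ 0) :
    ∃ φ : Module.Dual F V, φ v = 1 ∧ φ w ≠ 0 := by
  obtain ⟨α, hα⟩ := Module.Projective.exists_dual_eq_one F hv
  obtain ⟨β, hβ⟩ := Module.Projective.exists_dual_eq_one F hw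
  by_cases hαw : α w = 0
  · by_cases hβv : β v = 0
    · exact ⟨α + β, by simp [hα, hβv], by simp [hαw, hβ]⟩
    · exact ⟨(β v)⁻¹ • β, by simp [hβv], by simp [hβ, hβv]⟩
  · exact ⟨α, hα, hαw⟩

theorem not_ker_le_range_of_dual {R M : Type*} [Semiring R] [AddCommMonoid M] [Module R M]
    {f : Module.End R M} {k : M} {φ : Module.Dual R M} (hk : f k = 0) (hφ : ∀ x, φ (f x) = 0)
    (hφk : φ k ≠ 0) : ¬ker f ≤ range f := by
  intro h
  obtain ⟨x, rfl⟩ := h hk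
  exact hφk (hφ x)

section LinearAlgebra

variable {F V : Type*} [Field F] [AddCommGroup V] [Module F V]

theorem exists_dual_eq_one_of_notMem {p : Submodule F V} {x : V} (hx : x ∉ p) :
    ∃ φ : Module.Dual F V, φ x = 1 ∧ ∀ y ∈ p, φ y = 0 := by
  obtain ⟨φ, hφx, hφp⟩ := p.exists_le_ker_of_notMem hx
  exact ⟨(φ x)⁻¹ • φ, by simp [hφx], fun y hy => by simp [mem_ker.1 (hφp hy)]⟩

theorem exists_notMem_and_dual_eq_one {p : Submodule F V} (hp : p ≠ ⊤) {φ : Module.Dual F V}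
    (hφ : φ ≠ 0) : ∃ x ∉ p, φ x = 1 := by
  obtain ⟨y, hy⟩ := φ.surjective hφ 1
  by_contra! h
  refine hp (Submodule.eq_top_iff'.2 fun x => ?_)
  have hyp : y ∈ p := by
    by_contra hyp
    exact h y hyp hy
  have hxy : x + (1 - φ x) • y ∈ p := by
    by_contra hxy
    exact h _ hxy (by simp [hy])
  exact (p.add_mem_iff_left (p.smul_mem _ hyp)).1 hxy

theorem exists_not_ker_le_range_sub_smulRight {g : Module.End F V} (hg : g ≠ 0) :
    ∃ (a : Module.Dual F V) (c : V),
      ¬ker (g - a.smulRight c) ≤ range (g - a.smulRight c) := by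
  obtain ⟨v, hgv⟩ := DFunLike.ne_iff.1 hg
  have hv : v ≠ 0 := by
    rintro rfl
    simp at hgv
  obtain ⟨χ, hχgv, hχv⟩ := exists_dual_eq_one_and_ne_zero (F := F) hgv hv
  exact ⟨χ ∘ₗ g, g v, not_ker_le_range_of_dual (k := v) (φ := χ) (by simp [hχgv])
    (by simp [hχgv]) hχv⟩

theorem exists_not_ker_le_range_sub_smulRight_sub_smulRight (g : Module.End F V) {c : V}
    (hc : c ≠ 0) {r : Module.Dual F V} (hr : r ≠ 0) :
    ∃ (a : Module.Dual F V) (z : V),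
      ¬ker (g - a.smulRight c - r.smulRight z) ≤ range (g - a.smulRight c - r.smulRight z) := by
  obtain ⟨k, hk⟩ := r.surjective hr 1
  have hk₀ : k ≠ 0 := by
    rintro rfl
    simp at hk
  obtain ⟨χ, hχc, hχk⟩ := exists_dual_eq_one_and_ne_zero (F := F) hc hk₀
  exact ⟨χ ∘ₗ g, g k - χ (g k) • c, not_ker_le_range_of_dual (k := k) (φ := χ) (by simp [hk])
    (by simp [hχc]) hχk⟩

theorem isNilpotentProduct_of_not_ker_le_range [Module.Finite F V] {f : Module.End F V}
    (h : ¬ker f ≤ range f) : IsNilpotentProduct f := by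
  induction hd : Module.finrank F V using Nat.strong_induction_on generalizing V with
  | _ d ih =>
  obtain rfl | hf := eq_or_ne f 0
  · exact ⟨0, 0, .zero, .zero, by simp⟩
  obtain ⟨k, hk, hkf⟩ := SetLike.not_le_iff_exists.1 h
  rw [mem_ker] at hk
  obtain ⟨φ, hφk, hφf⟩ := exists_dual_eq_one_of_notMem hkf
  replace hφf (x : V) : φ (f x) = 0 := hφf _ (mem_range_self f x)
  let W := ker φ
  let p : V →ₗ[F] W := (.id - φ.smulRight k).codRestrict W fun x => by simp [W, hφk]
  have coe_p (x : V) : (p x : V) = x - φ x • k := rfl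
  have hφW (w : W) : φ w = 0 := w.2
  have hpk : p k = 0 := by ext; simp [coe_p, hφk]
  let g : Module.End F W := f.restrict fun x _ => hφf x
  have coe_g_p (x : V) : (g (p x) : V) = f x := by
    change f (p x) = f x
    rw [coe_p, map_sub, map_smul, hk, smul_zero, sub_zero]
  have hg : g ≠ 0 := by
    intro hg
    exact hf (LinearMap.ext fun x => by simp [← coe_g_p, hg])
  obtain ⟨a, c, hac⟩ := exists_not_ker_le_range_sub_smulRight hg
  have hW : W ≠ ⊤ := fun hW => by simp [ker_eq_top.1 hW] at hφk
  have hWV : Module.finrank F W < d := hd ▸ Submodule.finrank_lt hW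
  have hfactor : f = φ.smulRight (c : V) * (a ∘ₗ p).smulRight k +
      W.subtype ∘ₗ (g - a.smulRight c) ∘ₗ p := by
    ext x
    simp [coe_g_p, hφk]
  rw [hfactor]
  exact (ih _ hWV hac rfl).mul_add_comp_comp (by ext; simp [coe_p, hφW])
    (isNilpotent_smulRight (hφW c)) (isNilpotent_smulRight (by simp [hpk]))
    (by ext; simp [hφW]) (by ext; simp [hpk])

/-- In the decomposition `⟨e⟩ ⊕ W ⊕ ⟨e'⟩`, where `ψ` and `φ` are the coordinates along `e` and
`e'`, the matrix is `[[0, r, 0], [0, g, c], [0, 0, 0]]`. -/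
theorem isNilpotentProduct_comp_comp_add_smulRight_add_smulRight {W : Type*} [AddCommGroup W]
    [Module F W] [Module.Finite F W] {i : W →ₗ[F] V} {p : V →ₗ[F] W} (hpi : p ∘ₗ i = .id)
    {e e' : V} (hpe : p e = 0) (hpe' : p e' = 0) {φ ψ : Module.Dual F V}
    (hφi : φ ∘ₗ i = 0) (hψi : ψ ∘ₗ i = 0) (hφe : φ e = 0) (hφe' : φ e' = 1) (hψe : ψ e = 1)
    (hψe' : ψ e' = 0) (g : Module.End F W) {c : W} (hc : c ≠ 0) {r : Module.Dual F W}
    (hr : r ≠ 0) :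
    IsNilpotentProduct (i ∘ₗ g ∘ₗ p + (r ∘ₗ p).smulRight e + φ.smulRight (i c) :
      Module.End F V) := by
  have hφi (w : W) : φ (i w) = 0 := congr($hφi w)
  have hψi (w : W) : ψ (i w) = 0 := congr($hψi w)
  obtain ⟨a, z, haz⟩ := exists_not_ker_le_range_sub_smulRight_sub_smulRight g hc hr
  let X : Module.End F V := φ.smulRight (e + i z) + ψ.smulRight (i c)
  let Y : Module.End F V := (r ∘ₗ p).smulRight e' + (a ∘ₗ p + φ).smulRight e
  have hX : IsNilpotent X := isNilpotent_add_of_mul_eq_zero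
    (isNilpotent_smulRight (by simp [hφe, hφi])) (isNilpotent_smulRight (hψi c))
    (by ext; simp [hφi])
  have hY : IsNilpotent Y := isNilpotent_add_of_mul_eq_zero
    (isNilpotent_smulRight (by simp [hpe'])) (isNilpotent_smulRight (by simp [hpe, hφe]))
    (by ext; simp [hpe])
  have hfactor : i ∘ₗ g ∘ₗ p + (r ∘ₗ p).smulRight e + φ.smulRight (i c) =
      X * Y + i ∘ₗ (g - a.smulRight c - r.smulRight z) ∘ₗ p := by
    ext x
    simp only [X, Y, LinearMap.add_apply, LinearMap.sub_apply, comp_apply, smulRight_apply,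
      Module.End.mul_apply, map_add, map_sub, map_smul, hφe, hφe', hψe, hψe']
    module
  rw [hfactor]
  exact (isNilpotentProduct_of_not_ker_le_range haz).mul_add_comp_comp hpi hX hY
    (by ext; simp [X, hφi, hψi]) (by ext; simp [Y, hpe, hpe'])

theorem isNilpotentProduct_of_zero_corner [Module.Finite F V] {f : Module.End F V} {e e' : V}
    {φ ψ : Module.Dual F V} (hφe : φ e = 0) (hφe' : φ e' = 1) (hψe : ψ e = 1) (hψe' : ψ e' = 0)
    (he : f e = 0) (hφf : ∀ x, φ (f x) = 0) (hψf : ψ (f e') = 0) (hfe' : f e' ≠ 0)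
    (hψf₀ : ψ ∘ₗ f ≠ 0) : IsNilpotentProduct f := by
  let W := ker φ ⊓ ker ψ
  let p : V →ₗ[F] W := (.id - ψ.smulRight e - φ.smulRight e').codRestrict W fun x => by
    simp [W, hφe, hφe', hψe, hψe']
  have coe_p (x : V) : (p x : V) = x - ψ x • e - φ x • e' := rfl
  have hφW (w : W) : φ w = 0 := w.2.1
  have hψW (w : W) : ψ w = 0 := w.2.2
  let g : Module.End F W := p ∘ₗ f ∘ₗ W.subtype
  let c : W := ⟨f e', hφf e', hψf⟩
  let r : Module.Dual F W := ψ ∘ₗ f ∘ₗ W.subtype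
  have r_p (x : V) : r (p x) = ψ (f x) := by simp [r, coe_p, he, hψf]
  have coe_g_p (x : V) : (g (p x) : V) = f x - ψ (f x) • e - φ x • f e' := by
    simp [g, coe_p, he, hφf, hψf]
  have hc : c ≠ 0 := fun hc => hfe' congr(($hc : V))
  have hr : r ≠ 0 := fun hr => hψf₀ (LinearMap.ext fun x => by simp [← r_p, hr])
  have hblocks : f = W.subtype ∘ₗ g ∘ₗ p + (r ∘ₗ p).smulRight e + φ.smulRight (W.subtype c) := by
    ext x
    change f x = (g (p x) : V) + r (p x) • e + φ x • f e'
    rw [coe_g_p, r_p]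
    abel
  rw [hblocks]
  exact isNilpotentProduct_comp_comp_add_smulRight_add_smulRight
    (by ext; simp [coe_p, hφW, hψW]) (by ext; simp [coe_p, hφe, hψe])
    (by ext; simp [coe_p, hφe', hψe']) (by ext; simp [hφW]) (by ext; simp [hψW])
    hφe hφe' hψe hψe' g hc hr

theorem isNilpotentProduct_of_ker_le_range [Module.Finite F V] {f : Module.End F V}
    (hf : ¬IsUnit f) (hle : ker f ≤ range f) (hrank : Module.finrank F (range f) ≠ 1) :
    IsNilpotentProduct f := by
  have hker : ker f ≠ ⊥ := (isUnit_iff_ker_eq_bot f).not.1 hf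
  have hrange : range f < ⊤ := lt_top_iff_ne_top.2 ((isUnit_iff_range_eq_top f).not.1 hf)
  obtain ⟨e, he, he₀⟩ := Submodule.exists_mem_ne_zero_of_ne_bot hker
  obtain ⟨φ, hφ₀, hφ⟩ := (range f).exists_le_ker_of_lt_top hrange
  have hφf (x : V) : φ (f x) = 0 := hφ (mem_range_self f x)
  have hφe : φ e = 0 := hφ (hle he)
  obtain ⟨x₀, rfl⟩ := hle he
  have hcomap : (F ∙ f x₀).comap f ≠ ⊤ := by
    intro htop
    have hspan : range f = F ∙ f x₀ := le_antisymm
      (by rintro _ ⟨x, rfl⟩; exact Submodule.eq_top_iff'.1 htop x)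
      (by simp)
    exact hrank (by rw [hspan, finrank_span_singleton he₀])
  obtain ⟨e', hfe', hφe'⟩ := exists_notMem_and_dual_eq_one hcomap hφ₀
  rw [Submodule.mem_comap] at hfe'
  have hmem : f x₀ ∉ Submodule.span F {e', f e'} := by
    intro hmem
    obtain ⟨s, t, hst⟩ := Submodule.mem_span_pair.1 hmem
    have hs : s = 0 := by simpa [hφe', hφf] using congr(φ $hst)
    rw [hs, zero_smul, zero_add] at hst
    have ht : t ≠ 0 := fun ht => he₀ (by rw [← hst, ht, zero_smul])
    exact hfe' (Submodule.mem_span_singleton.2 ⟨t⁻¹, by rw [← hst, inv_smul_smul₀ ht]⟩)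
  obtain ⟨ψ, hψe, hψ⟩ := exists_dual_eq_one_of_notMem hmem
  exact isNilpotentProduct_of_zero_corner hφe hφe' hψe
    (hψ _ (Submodule.mem_span_of_mem (by simp))) he hφf (hψ _ (Submodule.mem_span_of_mem (by simp)))
    (fun h₀ => hfe' (by simp [h₀])) (DFunLike.ne_iff.2 ⟨x₀, by simp [hψe]⟩)

theorem ker_eq_range_and_finrank_range_eq_one_iff [Module.Finite F V] {f : Module.End F V} :
    ker f = range f ∧ Module.finrank F (range f) = 1 ↔
      Module.finrank F V = 2 ∧ IsNilpotent f ∧ f ≠ 0 := by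
  have hrank_nullity := f.finrank_range_add_finrank_ker
  constructor
  · rintro ⟨hker, hrank⟩
    refine ⟨by rw [← hrank_nullity, hker, hrank], ⟨2, ?_⟩, ?_⟩
    · rw [pow_two]
      exact range_le_ker_iff.1 hker.ge
    · intro hf
      rw [range_eq_bot.2 hf, finrank_bot] at hrank
      exact zero_ne_one hrank
  · rintro ⟨hdim, hnil, hf⟩
    have hsq : f ^ 2 = 0 := by
      have := f.aeval_self_charpoly
      rwa [hnil.charpoly_eq_X_pow_finrank, hdim, Polynomial.aeval_X_pow] at this
    have hle : range f ≤ ker f := range_le_ker_iff.2 (by rwa [pow_two] at hsq)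
    have hpos : 0 < Module.finrank F (range f) := by
      rwa [Nat.pos_iff_ne_zero, Ne, Submodule.finrank_eq_zero, range_eq_bot]
    have hmono := Submodule.finrank_mono hle
    exact ⟨(Submodule.eq_of_le_of_finrank_eq hle (by omega)).symm, by omega⟩

theorem mul_eq_zero_of_isNilpotent_of_finrank_eq_two (hdim : Module.finrank F V = 2)
    {l u : Module.End F V} (hl : IsNilpotent l) (hu : IsNilpotent u) (hlu : IsNilpotent (l * u)) :
    l * u = 0 := by
  have : Module.Finite F V := Module.finite_of_finrank_eq_succ hdim
  by_contra hne
  obtain ⟨hkerl, hrankl⟩ :=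
    ker_eq_range_and_finrank_range_eq_one_iff.2 ⟨hdim, hl, left_ne_zero_of_mul hne⟩
  obtain ⟨hkeru, hranku⟩ :=
    ker_eq_range_and_finrank_range_eq_one_iff.2 ⟨hdim, hu, right_ne_zero_of_mul hne⟩
  obtain ⟨hkerlu, hranklu⟩ := ker_eq_range_and_finrank_range_eq_one_iff.2 ⟨hdim, hlu, hne⟩
  have hker : ker u = ker (l * u) := Submodule.eq_of_le_of_finrank_eq (ker_le_ker_comp u l)
    (by rw [hkeru, hkerlu, hranku, hranklu])
  have hrange : range (l * u) = range l := Submodule.eq_of_le_of_finrank_eq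
    (range_comp_le_range u l) (hranklu.trans hrankl.symm)
  have : range u = ker l := by
    rw [← hkeru, hker, hkerlu, hrange, hkerl]
  exact hne (range_le_ker_iff.1 this.le)

theorem isNilpotentProduct_iff [Module.Finite F V] [Nontrivial V] (f : Module.End F V) :
    IsNilpotentProduct f ↔ ¬IsUnit f ∧ ¬(Module.finrank F V = 2 ∧ IsNilpotent f ∧ f ≠ 0) := by
  constructor
  · refine fun hf => ⟨hf.not_isUnit, ?_⟩
    obtain ⟨l, u, hl, hu, rfl⟩ := hf
    exact fun ⟨hdim, hlu, hne⟩ =>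
      hne (mul_eq_zero_of_isNilpotent_of_finrank_eq_two hdim hl hu hlu)
  · rintro ⟨hf, hexc⟩
    by_cases hle : ker f ≤ range f
    · refine isNilpotentProduct_of_ker_le_range hf hle fun hrank => hexc ?_
      have hker : 1 ≤ Module.finrank F (ker f) :=
        Submodule.one_le_finrank_iff.2 ((isUnit_iff_ker_eq_bot f).not.1 hf)
      exact ker_eq_range_and_finrank_range_eq_one_iff.1
        ⟨Submodule.eq_of_le_of_finrank_le hle (hrank ▸ hker), hrank⟩
    · exact isNilpotentProduct_of_not_ker_le_range hle

end LinearAlgebra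

/-- **Theorem (Laffey/Sourour).** Over an arbitrary field `F`, an `n × n` matrix `A`
is a product of two nilpotent matrices if and only if it is singular, except when
`n = 2` and `A` is a nonzero nilpotent matrix. -/
theorem product_of_two_nilpotents_iff_singular
    (F : Type*) [Field F] (n : ℕ) (hn : 0 < n) (A : Matrix (Fin n) (Fin n) F) :
    (∃ N₁ N₂ : Matrix (Fin n) (Fin n) F,
        IsNilpotent N₁ ∧ IsNilpotent N₂ ∧ A = N₁ * N₂) ↔
      (¬ IsUnit A ∧ ¬ (n = 2 ∧ IsNilpotent A ∧ A ≠ 0)) := by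
  have : Nonempty (Fin n) := Fin.pos_iff_nonempty.1 hn
  let e : Matrix (Fin n) (Fin n) F ≃ₐ[F] Module.End F (Fin n → F) := Matrix.toLinAlgEquiv'
  have hunit : IsUnit (e A) ↔ IsUnit A := MulEquiv.isUnit_map e
  have hnil : IsNilpotent (e A) ↔ IsNilpotent A := IsNilpotent.map_iff e.injective
  have hzero : e A ≠ 0 ↔ A ≠ 0 := map_ne_zero_iff e e.injective
  have hprod : IsNilpotentProduct (e A) ↔ IsNilpotentProduct A :=
    isNilpotentProduct_map_equiv_iff e.toMulEquiv
  have hmain := isNilpotentProduct_iff (e A)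
  rwa [hprod, hunit, hnil, hzero, Module.finrank_fin_fun] at hmain
end

section
/- Let F be a field and let A be a 2×2 matrix over F that is nilpotent and nonzero. Then A cannot be written as a product N₁N₂ of two nilpotent 2×2 matrices over F. -/
/-!
In a module of length at most two, comparable submodules that are nonzero and proper coincide.
If `f ≠ 0` is a nilpotent endomorphism with `f ^ k ≠ 0 = f ^ (k + 1)`, then `im (f ^ k)` lies in
both `im f` and `ker f`, so `im f = ker f`. Hence, if `f`, `g` and `f * g` were all nilpotent and
nonzero, then `im g = ker g ≤ ker (f * g) = im (f * g) ≤ im f = ker f`, which says that `f * g = 0`.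
-/

lemma eq_of_le_of_height_top_le_two {α : Type*} [PartialOrder α] [BoundedOrder α]
    (hα : Order.height (⊤ : α) ≤ 2) {a b : α} (ha : a ≠ ⊥) (hab : a ≤ b) (hb : b ≠ ⊤) :
    a = b := by
  by_contra hne
  have three_le_height_top : (3 : ℕ∞) ≤ Order.height (⊤ : α) :=
    calc
      (3 : ℕ∞) = Order.height (⊥ : α) + 1 + 1 + 1 := by rw [Order.height_bot]; rfl
      _ ≤ Order.height a + 1 + 1 := by gcongr; exact Order.height_add_one_le ha.bot_lt
      _ ≤ Order.height b + 1 := by gcongr; exact Order.height_add_one_le (hab.lt_of_ne hne)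
      _ ≤ Order.height (⊤ : α) := Order.height_add_one_le hb.lt_top
  exact absurd (three_le_height_top.trans hα) (by decide)

lemma exists_pow_ne_zero_and_pow_succ_eq_zero {S : Type*} [MonoidWithZero S] {x : S}
    (hx : IsNilpotent x) (hx0 : x ≠ 0) : ∃ k ≠ 0, x ^ k ≠ 0 ∧ x ^ (k + 1) = 0 := by
  have : Nontrivial S := ⟨x, 0, hx0⟩
  obtain ⟨k, hk⟩ := Nat.exists_eq_succ_of_ne_zero (pos_nilpotencyClass_iff.mpr hx).ne'
  obtain ⟨hzero, hne⟩ := nilpotencyClass_eq_succ_iff.mp hk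
  exact ⟨k, by rintro rfl; exact hx0 (by simpa using hzero), hne, hzero⟩

section

variable {R M : Type*} [Ring R] [AddCommGroup M] [Module R M]

lemma range_eq_ker_of_isNilpotent_of_length_le_two (hM : Module.length R M ≤ 2)
    {f : Module.End R M} (hf : IsNilpotent f) (hf0 : f ≠ 0) : f.range = f.ker := by
  rw [Module.length_eq_height] at hM
  obtain ⟨k, hk, hne, hzero⟩ := exists_pow_ne_zero_and_pow_succ_eq_zero hf hf0
  have range_pow_ne_bot : (f ^ k).range ≠ ⊥ := mt LinearMap.range_eq_bot.mp hne
  have range_pow_le_ker : (f ^ k).range ≤ f.ker :=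
    LinearMap.range_le_ker_iff.mpr ((pow_succ' f k).symm.trans hzero)
  have range_le_ker_pow : f.range ≤ (f ^ k).ker :=
    LinearMap.range_le_ker_iff.mpr ((pow_succ f k).symm.trans hzero)
  have range_ne_top : f.range ≠ ⊤ := fun h ↦
    hne (LinearMap.ker_eq_top.mp (top_le_iff.mp (h ▸ range_le_ker_pow)))
  have range_pow_le_range : (f ^ k).range ≤ f.range := by
    rw [← mul_pow_sub_one hk f]
    exact LinearMap.range_comp_le_range _ _
  calc
    f.range = (f ^ k).range :=
      (eq_of_le_of_height_top_le_two hM range_pow_ne_bot range_pow_le_range range_ne_top).symm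
    _ = f.ker :=
      eq_of_le_of_height_top_le_two hM range_pow_ne_bot range_pow_le_ker
        (mt LinearMap.ker_eq_top.mp hf0)

theorem two_by_two_nonzero_nilpotent_not_product_of_nilpotents_general
    (hM : Module.length R M ≤ 2) {f g : Module.End R M}
    (hf : IsNilpotent f) (hg : IsNilpotent g) (hfg : IsNilpotent (f * g)) : f * g = 0 := by
  by_contra hfg0
  have range_le_ker : g.range ≤ f.ker :=
    calc
      g.range = g.ker :=
        range_eq_ker_of_isNilpotent_of_length_le_two hM hg (right_ne_zero_of_mul hfg0)
      _ ≤ (f * g).ker := LinearMap.ker_le_ker_comp g f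
      _ = (f * g).range := (range_eq_ker_of_isNilpotent_of_length_le_two hM hfg hfg0).symm
      _ ≤ f.range := LinearMap.range_comp_le_range g f
      _ = f.ker := range_eq_ker_of_isNilpotent_of_length_le_two hM hf (left_ne_zero_of_mul hfg0)
  exact hfg0 (LinearMap.range_le_ker_iff.mp range_le_ker)

end

/-- A nonzero nilpotent `2 × 2` matrix over a field is not a product of two
nilpotent `2 × 2` matrices. -/
theorem two_by_two_nonzero_nilpotent_not_product_of_nilpotents
    (F : Type*) [Field F] (A : Matrix (Fin 2) (Fin 2) F)
    (hA : IsNilpotent A) (hA0 : A ≠ 0) :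
    ¬ ∃ N₁ N₂ : Matrix (Fin 2) (Fin 2) F,
        IsNilpotent N₁ ∧ IsNilpotent N₂ ∧ A = N₁ * N₂ := by
  rintro ⟨N₁, N₂, hN₁, hN₂, rfl⟩
  let toEnd := Matrix.toLinAlgEquiv' (R := F) (n := Fin 2)
  have length_le_two : Module.length F (Fin 2 → F) ≤ 2 := by simp [Module.length_eq_finrank]
  refine hA0 ((map_eq_zero_iff toEnd toEnd.injective).mp ?_)
  rw [map_mul]
  exact two_by_two_nonzero_nilpotent_not_product_of_nilpotents_general length_le_two
    (hN₁.map toEnd) (hN₂.map toEnd) (map_mul toEnd N₁ N₂ ▸ hA.map toEnd)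
end

section
/- Let F be a field and A an n×n matrix over F with A² ≠ 0. Then A is similar over F to a block matrix of the form [[λ, cᵀ],[b, D]], where λ ∈ F, D is an (n−1)×(n−1) matrix over F with rank(D) = rank(A) − 1, b is a column vector in the column space (range) of D, and c is a column vector in the range of Dᵀ. -/
/-!
Choose a vector `u` and a covector `g` with `g A² u` and `g A u` both nonzero, scaled so that
`g A² u = 1`. Then the covector `g A` and the vector `A u` pair to `1` and extend to dual bases;
let `M = [[a, c], [b, D]]` be the matrix of `A` in them. In these bases `A` sends `u` to the first
basis vector, and `g A` is the first dual basis vector, while `u` and `g` have first coordinate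
`g A u ≠ 0`. Dividing by that coordinate expresses `b` through the columns and `c` through the rows
of `D`, and makes the Schur complement of `D` in `M` equal to `(g A u)⁻¹`, so
`rank M = 1 + rank D`. The argument works verbatim with `1` replaced by any block size.
-/

open Matrix Module

section Rank

variable {F : Type*} [Field F] {k l m n : Type*} [Fintype l] [Fintype n]

theorem finrank_submodule_prod {V W : Type*} [AddCommGroup V] [AddCommGroup W] [Module F V]
    [Module F W] (p : Submodule F V) (q : Submodule F W) [Module.Finite F p] [Module.Finite F q] :
    finrank F (p.prod q) = finrank F p + finrank F q := by
  have hinj : Function.Injective (p.subtype.prodMap q.subtype) :=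
    Prod.map_injective.2 ⟨p.injective_subtype, q.injective_subtype⟩
  rw [← finrank_prod, ← LinearMap.finrank_range_of_inj hinj, LinearMap.range_prodMap,
    p.range_subtype, q.range_subtype]

theorem rank_fromBlocks_zero_zero (A : Matrix k l F) (D : Matrix m n F) :
    (fromBlocks A 0 0 D).rank = A.rank + D.rank := by
  let eₗ := LinearEquiv.sumArrowLequivProdArrow k m F F
  let eᵣ := LinearEquiv.sumArrowLequivProdArrow l n F F
  have hconj : eₗ.toLinearMap ∘ₗ (fromBlocks A 0 0 D).mulVecLin =
      A.mulVecLin.prodMap D.mulVecLin ∘ₗ eᵣ.toLinearMap := by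
    refine LinearMap.ext fun x ↦ ?_
    ext i <;> simp [fromBlocks_mulVec, eₗ, eᵣ, LinearEquiv.sumArrowLequivProdArrow,
      Equiv.sumArrowEquivProdArrow, Function.comp_def]
  calc (fromBlocks A 0 0 D).rank
      = finrank F ((fromBlocks A 0 0 D).mulVecLin.range.map eₗ.toLinearMap) :=
        (LinearEquiv.finrank_map_eq eₗ _).symm
    _ = finrank F (A.mulVecLin.range.prod D.mulVecLin.range) := by
        rw [← LinearMap.range_comp, hconj, LinearMap.range_comp_of_range_eq_top _ eᵣ.range,
          LinearMap.range_prodMap]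
    _ = A.rank + D.rank := finrank_submodule_prod _ _

theorem rank_fromBlocks_mul_mul [Finite k] [Fintype m] (A : Matrix k l F) (Z : Matrix k m F)
    (Y : Matrix n l F) (D : Matrix m n F) :
    (fromBlocks A (Z * D) (D * Y) D).rank = (A - Z * D * Y).rank + D.rank := by
  classical
  have := Fintype.ofFinite k
  let L : Matrix (k ⊕ m) (k ⊕ m) F := fromBlocks 1 Z 0 1
  let R : Matrix (l ⊕ n) (l ⊕ n) F := fromBlocks 1 0 Y 1
  have hfactor : fromBlocks A (Z * D) (D * Y) D = L * fromBlocks (A - Z * D * Y) 0 0 D * R := by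
    simp [L, R, fromBlocks_multiply]
  rw [hfactor, rank_mul_eq_left_of_isUnit_det _ _ (by simp [R]),
    rank_mul_eq_right_of_isUnit_det _ _ (by simp [L]), rank_fromBlocks_zero_zero]

end Rank

section Compression

variable {F : Type*} [Field F] {k l m n : Type*} [Fintype k] [Fintype l] [Fintype m] [Fintype n]

theorem exists_mul_eq_and_rank_fromBlocks [DecidableEq l] {A U : Matrix l l F} {B : Matrix l m F}
    {C : Matrix n l F} {D : Matrix n m F} {V : Matrix m l F} {H : Matrix l n F} (hU : IsUnit U)
    (hAB : A * U + B * V = 1) (hCD : C * U + D * V = 0) (hBD : U * B + H * D = 0) :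
    (∃ Y, D * Y = C) ∧ (∃ Z, Z * D = B) ∧
      (fromBlocks A B C D).rank = D.rank + Fintype.card l := by
  have hdet : IsUnit U.det := U.isUnit_iff_isUnit_det.1 hU
  obtain ⟨Y, hYU⟩ : ∃ Y, Y * U = -V := ⟨-V * U⁻¹, nonsing_inv_mul_cancel_right U _ hdet⟩
  obtain ⟨Z, hUZ⟩ : ∃ Z, U * Z = -H := ⟨U⁻¹ * -H, mul_nonsing_inv_cancel_left U _ hdet⟩
  have hY : D * Y = C := by
    refine mul_left_injective_of_inv U U⁻¹ (mul_nonsing_inv U hdet) ?_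
    simpa [Matrix.mul_assoc, hYU] using (eq_neg_of_add_eq_zero_left hCD).symm
  have hZ : Z * D = B := by
    refine mul_right_injective_of_inv U⁻¹ U (nonsing_inv_mul U hdet) ?_
    simpa [← Matrix.mul_assoc, hUZ] using (eq_neg_of_add_eq_zero_left hBD).symm
  have hschur : (A - B * Y) * U = 1 := by
    rw [Matrix.sub_mul, Matrix.mul_assoc, hYU, Matrix.mul_neg, sub_neg_eq_add, hAB]
  refine ⟨⟨Y, hY⟩, ⟨Z, hZ⟩, ?_⟩
  rw [← hY, ← hZ, rank_fromBlocks_mul_mul, hZ, rank_of_isUnit _ (.of_mul_eq_one _ hschur),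
    add_comm]

theorem exists_fromCols_mul_fromRows_eq_one [DecidableEq k] [DecidableEq l]
    (hcard : Fintype.card l + Fintype.card m = Fintype.card k)
    {f : Matrix l k F} {v : Matrix k l F} (hfv : f * v = 1) :
    ∃ (W : Matrix k m F) (K : Matrix m k F), fromCols v W * fromRows f K = 1 := by
  classical
  let N := f.toLin'.ker
  have hsurj : Function.Surjective f.toLin' := fun x ↦ ⟨v *ᵥ x, by simp [hfv]⟩
  have hker : finrank F N = finrank F (m → F) := by
    have hsum := f.toLin'.finrank_range_add_finrank_ker
    rw [LinearMap.range_eq_top.2 hsurj, finrank_top, finrank_fintype_fun_eq_card,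
      finrank_fintype_fun_eq_card, ← hcard] at hsum
    rw [finrank_fintype_fun_eq_card]
    exact Nat.add_left_cancel hsum
  let κ : N ≃ₗ[F] (m → F) := .ofFinrankEq _ _ hker
  let π : (k → F) →ₗ[F] N := (1 - v * f).toLin'.codRestrict _ fun x ↦ by
    simp [N, mulVec_sub, ← Matrix.mul_assoc, hfv]
  have hπ : (N.subtype ∘ₗ κ.symm.toLinearMap) ∘ₗ (κ.toLinearMap ∘ₗ π) = (1 - v * f).toLin' := by
    refine LinearMap.ext fun x ↦ ?_
    simp [π]
  refine ⟨(N.subtype ∘ₗ κ.symm.toLinearMap).toMatrix', (κ.toLinearMap ∘ₗ π).toMatrix', ?_⟩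
  rw [fromCols_mul_fromRows, ← LinearMap.toMatrix'_comp, hπ, LinearMap.toMatrix'_toLin',
    add_sub_cancel]

variable [DecidableEq k]

theorem exists_inv_mul_mul_eq_reindex {ι : Type*} [DecidableEq ι] (e : ι ≃ k) (A : Matrix k k F)
    {T : Matrix ι k F} {S : Matrix k ι F} (hTS : T * S = 1) :
    ∃ P : Matrix k k F, IsUnit P ∧ P⁻¹ * A * P = reindex e e (T * A * S) := by
  have hinv : T.submatrix e.symm id * S.submatrix id e.symm = 1 := by
    rw [← submatrix_mul T S e.symm id e.symm Function.bijective_id, hTS, submatrix_one_equiv]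
  refine ⟨S.submatrix id e.symm, .of_mul_eq_one_right _ hinv, ?_⟩
  rw [inv_eq_left_inv hinv]
  rfl

theorem exists_similar_fromBlocks [DecidableEq l] (e : l ⊕ m ≃ k) {A : Matrix k k F}
    {G : Matrix l k F} {U : Matrix k l F} (hGU : G * A * (A * U) = 1) (hU : IsUnit (G * A * U)) :
    ∃ (P : Matrix k k F) (a : Matrix l l F) (c : Matrix l m F) (b : Matrix m l F)
      (D : Matrix m m F), IsUnit P ∧ P⁻¹ * A * P = reindex e e (fromBlocks a c b D) ∧
        A.rank = D.rank + Fintype.card l ∧ (∃ Y, D * Y = b) ∧ ∃ Z, Z * D = c := by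
  classical
  have hcard : Fintype.card l + Fintype.card m = Fintype.card k := by
    rw [← Fintype.card_sum, Fintype.card_congr e]
  obtain ⟨W, K, hST⟩ := exists_fromCols_mul_fromRows_eq_one hcard hGU
  have hTS := (fromCols_mul_fromRows_eq_one_comm e.symm ..).1 hST
  obtain ⟨P, hP, hsim⟩ := exists_inv_mul_mul_eq_reindex e A hTS
  rw [fromRows_mul, fromRows_mul_fromCols] at hsim
  rw [fromCols_mul_fromRows] at hST
  rw [fromRows_mul_fromCols, ← fromBlocks_one, fromBlocks_inj] at hTS
  obtain ⟨-, hGW, hKU, -⟩ := hTS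
  have hAB : G * A * A * (A * U) * (G * A * U) + G * A * A * W * (K * U) = 1 := by
    rw [← hGU]
    simpa [Matrix.mul_add, Matrix.add_mul, Matrix.mul_assoc] using congr(G * A * A * $hST * U)
  have hCD : K * A * (A * U) * (G * A * U) + K * A * W * (K * U) = 0 := by
    rw [← hKU]
    simpa [Matrix.mul_add, Matrix.add_mul, Matrix.mul_assoc] using congr(K * A * $hST * U)
  have hBD : G * A * U * (G * A * A * W) + G * W * (K * A * W) = 0 := by
    rw [← hGW]
    simpa [Matrix.mul_add, Matrix.add_mul, Matrix.mul_assoc] using congr(G * $hST * A * W)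
  obtain ⟨hb, hc, hrank⟩ := exists_mul_eq_and_rank_fromBlocks hU hAB hCD hBD
  have hdet := P.isUnit_iff_isUnit_det.1 hP
  refine ⟨P, _, _, _, _, hP, hsim, ?_, hb, hc⟩
  rw [← hrank, ← rank_reindex e e, ← hsim, rank_mul_eq_left_of_isUnit_det _ _ hdet,
    rank_mul_eq_right_of_isUnit_det _ _ (isUnit_nonsing_inv_det P hdet)]

end Compression

section Nonvanishing

theorem exists_apply_ne_zero_and_apply_ne_zero {R V W₁ W₂ : Type*} [Ring R] [AddCommGroup V]
    [AddCommGroup W₁] [AddCommGroup W₂] [Module R V] [Module R W₁] [Module R W₂]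
    {φ : V →ₗ[R] W₁} {ψ : V →ₗ[R] W₂} (hφ : φ ≠ 0) (hψ : ψ ≠ 0) :
    ∃ v, φ v ≠ 0 ∧ ψ v ≠ 0 := by
  by_contra! h
  have hcover : ((⊤ : Submodule R V) : Set V) ⊆ φ.ker ∪ ψ.ker := fun v _ ↦
    or_iff_not_imp_left.2 (h v)
  simp only [AddSubgroupClass.subset_union, top_le_iff, LinearMap.ker_eq_top] at hcover
  exact hcover.elim hφ hψ

variable {F : Type*} [Field F] {k : Type*} [Fintype k]

theorem exists_dotProduct_ne_zero_and_dotProduct_ne_zero {x y : k → F} (hx : x ≠ 0) (hy : y ≠ 0) :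
    ∃ g, g ⬝ᵥ x ≠ 0 ∧ g ⬝ᵥ y ≠ 0 := by
  have hne {z : k → F} (hz : z ≠ 0) : dotProductBilin F F z ≠ 0 := fun h ↦
    hz (dotProduct_eq_zero z (LinearMap.congr_fun h))
  simpa [dotProduct_comm] using exists_apply_ne_zero_and_apply_ne_zero (hne hx) (hne hy)

theorem exists_mul_mul_eq_one_and_isUnit (l : Type*) [Fintype l] [DecidableEq l] [Subsingleton l]
    {A : Matrix k k F} (hA : A * A ≠ 0) :
    ∃ (G : Matrix l k F) (U : Matrix k l F), G * A * (A * U) = 1 ∧ IsUnit (G * A * U) := by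
  obtain ⟨u, hu⟩ : ∃ u, (A * A) *ᵥ u ≠ 0 := by
    contrapose! hA
    exact mulVec_injective (funext fun u ↦ by rw [hA, zero_mulVec])
  have hAu : A *ᵥ u ≠ 0 := fun h ↦ hu (by rw [← mulVec_mulVec, h, mulVec_zero])
  obtain ⟨g, hgAAu, hgAu⟩ := exists_dotProduct_ne_zero_and_dotProduct_ne_zero hu hAu
  have hsmul (B : Matrix k k F) :
      replicateRow l g * (B * replicateCol l u) = (g ⬝ᵥ B *ᵥ u) • (1 : Matrix l l F) := by
    ext i j
    rw [Subsingleton.elim i j, ← replicateCol_mulVec, replicateRow_mul_replicateCol_apply,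
      Matrix.smul_apply, one_apply_eq, smul_eq_mul, mul_one]
  refine ⟨(g ⬝ᵥ (A * A) *ᵥ u)⁻¹ • replicateRow l g, replicateCol l u, ?_, ?_⟩
  · rw [Matrix.smul_mul, Matrix.smul_mul, Matrix.mul_assoc, ← Matrix.mul_assoc A, hsmul,
      inv_smul_smul₀ hgAAu]
  · rw [Matrix.smul_mul, Matrix.smul_mul, Matrix.mul_assoc, hsmul, smul_smul]
    exact isUnit_one.smul (Units.mk0 _ (mul_ne_zero (inv_ne_zero hgAAu) hgAu))

end Nonvanishing

/-- **Sourour's Proposition.** If `A` is an `n × n` matrix over a field with `A² ≠ 0`,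
then `A` is similar to a block matrix `[[λ, cᵀ], [b, D]]` where `D` is `(n-1) × (n-1)`
with `rank D = rank A - 1`, `b` lies in the range (column space) of `D`, and `c` lies
in the range of `Dᵀ`. (Here the `n × n` size is written as `n + 1`.) -/
theorem sourour_proposition
    (F : Type*) [Field F] (n : ℕ) (A : Matrix (Fin (n + 1)) (Fin (n + 1)) F)
    (hA : A * A ≠ 0) :
    ∃ (S : Matrix (Fin (n + 1)) (Fin (n + 1)) F) (lam : F)
      (b c : Fin n → F) (D : Matrix (Fin n) (Fin n) F),
      IsUnit S ∧
      S⁻¹ * A * S =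
        Matrix.reindex (finSumFinEquiv.trans (finCongr (Nat.add_comm 1 n)))
          (finSumFinEquiv.trans (finCongr (Nat.add_comm 1 n)))
          (Matrix.fromBlocks (lam • (1 : Matrix (Fin 1) (Fin 1) F))
            (Matrix.of fun (_ : Fin 1) j => c j)
            (Matrix.of fun i (_ : Fin 1) => b i) D) ∧
      D.rank = A.rank - 1 ∧
      b ∈ LinearMap.range D.mulVecLin ∧
      c ∈ LinearMap.range (Matrix.transpose D).mulVecLin := by
  obtain ⟨G, U, hGU, hU⟩ := exists_mul_mul_eq_one_and_isUnit (Fin 1) hA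
  obtain ⟨S, a, c, b, D, hS, hsim, hrank, ⟨Y, hY⟩, Z, hZ⟩ := exists_similar_fromBlocks
    (finSumFinEquiv.trans (finCongr (Nat.add_comm 1 n))) hGU hU
  refine ⟨S, a 0 0, b.col 0, c.row 0, D, hS, ?_, ?_, ⟨Y.col 0, ?_⟩, ⟨Z.row 0, ?_⟩⟩
  · rw [hsim]
    congr
    · ext i j
      simp [Subsingleton.elim i 0, Subsingleton.elim j 0]
    · ext i j
      simp [Subsingleton.elim i 0]
    · ext i j
      simp [Subsingleton.elim j 0]
  · simp [hrank]
  · rw [← hY]; rfl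
  · rw [← hZ, mulVecLin_apply, mulVec_transpose]; rfl
end

section
/- Let F be a field and A an n×n matrix over F such that A² ≠ 0 and A is not a scalar matrix (A ≠ λI for every λ ∈ F). Then there exists a vector x₀ ∈ Fⁿ such that x₀ and Ax₀ are linearly independent and A²x₀ ≠ 0. -/
/-!
If `w ∉ W` and `v + w` with `v ∈ W` are both eigenvectors of `f`, and `W` is `f`-invariant, then
their common nonzero class in `V ⧸ W` forces the two eigenvalues to agree, so `v` is an eigenvector
too. Hence, if every vector outside a proper invariant subspace `W` were an eigenvector, every
vector would be, and `f` would be scalar. For the theorem take `W = ker A²`.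
-/

section

variable {K V : Type*} [Field K] [AddCommGroup V] [Module K V] {f g : Module.End K V}
  {W : Submodule K V}

theorem apply_eq_smul_of_apply_add_eq_smul (hW : W ∈ f.invtSubmodule) {v w : V} (hv : v ∈ W)
    (hw : w ∉ W) {a b : K} (hfw : f w = a • w) (hfvw : f (v + w) = b • (v + w)) :
    f v = a • v := by
  have hfv : f v - b • v = (b - a) • w := by
    rw [map_add, hfw, ← eq_sub_iff_add_eq] at hfvw
    rw [hfvw]
    module
  have hmem : (b - a) • w ∈ W := hfv ▸ W.sub_mem (hW hv) (W.smul_mem b hv)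
  have hab : b - a = 0 := by
    by_contra hne
    exact hw ((W.smul_mem_iff hne).mp hmem)
  rwa [hab, zero_smul, sub_eq_zero, sub_eq_zero.mp hab] at hfv

theorem exists_notMem_linearIndependent_pair_apply (hW : W ∈ f.invtSubmodule) (hW_top : W ≠ ⊤)
    (hf : ∀ a : K, f ≠ a • 1) : ∃ x ∉ W, LinearIndependent K ![x, f x] := by
  by_contra! hdep
  have eigen : ∀ x ∉ W, ∃ a : K, f x = a • x := by
    intro x hx
    have hx₀ : x ≠ 0 := fun h ↦ hx (h ▸ W.zero_mem)
    simpa only [LinearIndependent.pair_iff' hx₀, not_forall, not_not, eq_comm] using hdep x hx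
  obtain ⟨v, hv⟩ : ∃ v, LinearIndependent K ![v, f v] := by
    by_contra! h
    obtain ⟨a, ha⟩ := f.exists_eq_smul_id_of_forall_notLinearIndependent h
    exact hf a ha
  have hvW : v ∈ W := by_contra fun h ↦ hdep v h hv
  obtain ⟨w, hw⟩ : ∃ w, w ∉ W := by
    simpa only [ne_eq, Submodule.eq_top_iff', not_forall] using hW_top
  obtain ⟨a, ha⟩ := eigen w hw
  obtain ⟨b, hb⟩ := eigen (v + w) (by rwa [W.add_mem_iff_right hvW])
  exact (LinearIndependent.pair_iff' (hv.ne_zero 0)).mp hv a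
    (apply_eq_smul_of_apply_add_eq_smul hW hvW hw ha hb).symm

theorem exists_vector_independent_of_image_general (hfg : Commute f g) (hg : g ≠ 0)
    (hf : ∀ a : K, f ≠ a • 1) : ∃ x, LinearIndependent K ![x, f x] ∧ g x ≠ 0 := by
  have hker : LinearMap.ker g ∈ f.invtSubmodule := fun x hx ↦ by
    have hcomm : g (f x) = f (g x) := (LinearMap.congr_fun hfg x).symm
    rw [Submodule.mem_comap, LinearMap.mem_ker, hcomm, LinearMap.mem_ker.mp hx, map_zero]
  obtain ⟨x, hx, hli⟩ :=
    exists_notMem_linearIndependent_pair_apply hker (LinearMap.ker_eq_top.not.mpr hg) hf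
  exact ⟨x, hli, hx⟩

end

/-- If `A` is an `n × n` matrix over a field with `A² ≠ 0` which is not a scalar matrix,
then there is a vector `x₀` such that `x₀` and `A x₀` are linearly independent and
`A² x₀ ≠ 0`. -/
theorem exists_vector_independent_of_image
    (F : Type*) [Field F] (n : ℕ) (A : Matrix (Fin n) (Fin n) F)
    (hA : A * A ≠ 0) (hscalar : ∀ lam : F, A ≠ lam • (1 : Matrix (Fin n) (Fin n) F)) :
    ∃ x₀ : Fin n → F,
      LinearIndependent F ![x₀, A.mulVec x₀] ∧ A.mulVec (A.mulVec x₀) ≠ 0 := by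
  have hcomm : Commute A (A * A) := (Commute.refl A).mul_right (Commute.refl A)
  have hinj : Function.Injective (Matrix.toLinAlgEquiv' (R := F) (n := Fin n)) :=
    Matrix.toLinAlgEquiv'.injective
  simpa only [Matrix.toLinAlgEquiv'_apply, Matrix.mulVec_mulVec] using
    exists_vector_independent_of_image_general (hcomm.map Matrix.toLinAlgEquiv')
      ((map_ne_zero_iff _ hinj).mpr hA)
      fun a ha ↦ hscalar a (hinj (by rwa [map_smul, map_one]))
end

section
/- Let F be a field and k a positive odd integer. Then the (k+2)×(k+2) block diagonal matrix Dg[J_k(0), J_2(0)] is a product of two nilpotent matrices over F, each of rank equal to rank(Dg[J_k(0), J_2(0)]) = k. -/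
/-- The `k × k` nilpotent Jordan block `J_k(0)`, with ones on the subdiagonal. -/
def jordanBlock0 (F : Type*) [Field F] (k : ℕ) : Matrix (Fin k) (Fin k) F :=
  Matrix.of fun i j => if (i : ℕ) = (j : ℕ) + 1 then 1 else 0

/-!
With the basis indexed from `0`, the matrix `T = Dg[J_k(0), J_2(0)]` sends `e_j` to `e_{j+1}` for
the `k` indices `j ∈ {0, …, k - 2, k}` and kills the other two basis vectors. To factor `T`, choose
`k` distinct intermediate indices, let `N₂` send each such `e_j` to its intermediate basis vector
and `N₁` send that one to `e_{j+1}`; the rank of all three matrices is then `k`. Let the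
intermediate index be `j + 2` for `j < k - 2`, `k + 1` for `j = k - 2`, and `0` for `j = k`. Then
the arrows of `N₁` form the chain `0 → k + 1 → k - 1 → k - 2 → ⋯ → 1` (only `0 → 2` if `k = 1`),
while those of `N₂` are `k → 0` and arrows increasing the index, none of which ends in `k`. Neither
graph has a cycle, so both factors are nilpotent.
-/

section Nilpotent

variable {n R : Type*} [Fintype n] [DecidableEq n] [Semiring R] {N : Matrix n n R} {w : n → ℕ}

theorem add_le_of_pow_apply_ne_zero (hw : ∀ i j, N i j ≠ 0 → w j < w i) (m : ℕ) {i j : n}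
    (h : (N ^ m) i j ≠ 0) : w j + m ≤ w i := by
  induction m generalizing j with
  | zero =>
    obtain rfl : i = j := by
      by_contra hij
      simp [hij] at h
    simp
  | succ m ih =>
    rw [pow_succ, Matrix.mul_apply] at h
    obtain ⟨l, -, hl⟩ := Finset.exists_ne_zero_of_sum_ne_zero h
    have hil : w l + m ≤ w i := ih (left_ne_zero_of_mul hl)
    have hlj : w j < w l := hw l j (right_ne_zero_of_mul hl)
    omega

theorem isNilpotent_of_weight_lt (hw : ∀ i j, N i j ≠ 0 → w j < w i) : IsNilpotent N := by
  refine ⟨Finset.univ.sup w + 1, ?_⟩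
  ext i j
  by_contra h
  have hlarge := add_le_of_pow_apply_ne_zero hw _ h
  have hsmall : w i ≤ Finset.univ.sup w := Finset.le_sup (Finset.mem_univ i)
  omega

end Nilpotent

section TransferMatrix

variable {ι l m n : Type*} [Fintype ι] [DecidableEq l] [DecidableEq m] [DecidableEq n]

/-- The matrix `∑ d, E_{r d, c d}`, where `E` denotes a matrix unit. When `c` is injective, it sends
the basis vector `e_{c d}` to `e_{r d}` and kills the basis vectors outside the range of `c`. -/
def transferMatrix (R : Type*) [Semiring R] (r : ι → m) (c : ι → n) : Matrix m n R :=
  ∑ d, Matrix.single (r d) (c d) 1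

section Semiring

variable {R : Type*} [Semiring R]

theorem transferMatrix_apply (r : ι → m) (c : ι → n) (i : m) (j : n) :
    transferMatrix R r c i j = ∑ d, if r d = i ∧ c d = j then 1 else 0 := by
  simp only [transferMatrix, Matrix.sum_apply, Matrix.single_apply]

theorem transferMatrix_apply_of_injective (r : ι → m) {c : ι → n} (hc : c.Injective)
    (i : m) (j : n) [Decidable (∃ d, r d = i ∧ c d = j)] :
    transferMatrix R r c i j = if ∃ d, r d = i ∧ c d = j then 1 else 0 := by
  rw [transferMatrix_apply]
  split_ifs with h
  · obtain ⟨d, hd⟩ := h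
    rw [Finset.sum_eq_single d, if_pos hd]
    · exact fun d' _ hne => if_neg fun hd' => hne (hc (hd'.2.trans hd.2.symm))
    · simp
  · exact Finset.sum_eq_zero fun d _ => if_neg fun hd => h ⟨d, hd⟩

theorem exists_of_transferMatrix_apply_ne_zero {r : ι → m} {c : ι → n} {i : m} {j : n}
    (h : transferMatrix R r c i j ≠ 0) : ∃ d, r d = i ∧ c d = j := by
  rw [transferMatrix_apply] at h
  obtain ⟨d, -, hd⟩ := Finset.exists_ne_zero_of_sum_ne_zero h
  exact ⟨d, of_not_not fun hne => hd (if_neg hne)⟩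

theorem transferMatrix_mul_transferMatrix [Fintype m] (r : ι → l) {s : ι → m} (hs : s.Injective)
    (c : ι → n) : transferMatrix R r s * transferMatrix R s c = transferMatrix R r c := by
  simp only [transferMatrix, Matrix.sum_mul, Matrix.mul_sum]
  refine Finset.sum_congr rfl fun d _ => ?_
  rw [Finset.sum_eq_single d, Matrix.single_mul_single_same, one_mul]
  · exact fun d' _ hne => Matrix.single_mul_single_of_ne _ _ _ _ (hs.ne hne) _
  · simp

theorem transferMatrix_id_id [DecidableEq ι] : transferMatrix R (id : ι → ι) id = 1 :=
  Matrix.sum_single_one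

theorem isNilpotent_transferMatrix [Fintype n] {r c : ι → n} (w : n → ℕ)
    (hw : ∀ d, w (c d) < w (r d)) : IsNilpotent (transferMatrix R r c) := by
  refine isNilpotent_of_weight_lt (w := w) fun i j h => ?_
  obtain ⟨d, rfl, rfl⟩ := exists_of_transferMatrix_apply_ne_zero h
  exact hw d

end Semiring

theorem rank_transferMatrix {R : Type*} [CommSemiring R] [StrongRankCondition R]
    [Finite m] [Fintype n] {r : ι → m} {c : ι → n} (hr : r.Injective) (hc : c.Injective) :
    (transferMatrix R r c).rank = Fintype.card ι := by
  classical
  cases nonempty_fintype m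
  apply le_antisymm
  · calc (transferMatrix R r c).rank
        = (transferMatrix R r id * transferMatrix R (id : ι → ι) c).rank := by
          rw [transferMatrix_mul_transferMatrix r Function.injective_id c]
      _ ≤ (transferMatrix R r (id : ι → ι)).rank := Matrix.rank_mul_le_left _ _
      _ ≤ Fintype.card ι := Matrix.rank_le_card_width _
  · have hone : transferMatrix R id r * transferMatrix R r c * transferMatrix R c id =
        (1 : Matrix ι ι R) := by
      rw [transferMatrix_mul_transferMatrix id hr c, transferMatrix_mul_transferMatrix id hc id,
        transferMatrix_id_id]
    calc Fintype.card ι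
        = (1 : Matrix ι ι R).rank := Matrix.rank_one.symm
      _ = (transferMatrix R id r * transferMatrix R r c * transferMatrix R c id).rank := by
        rw [hone]
      _ ≤ (transferMatrix R (id : ι → ι) r * transferMatrix R r c).rank :=
        Matrix.rank_mul_le_left _ _
      _ ≤ (transferMatrix R r c).rank := Matrix.rank_mul_le_right _ _

end TransferMatrix

section JordanSum

variable {k : ℕ}

/-- The indices `j` for which `Dg[J_k(0), J_2(0)]` does not kill `e_j`, enumerated by `Fin k`: the
last element of `Fin k` stands for `k`, the first index of the block `J_2(0)`, and every other
element for itself. -/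
def jordanSource (d : Fin k) : Fin (k + 2) :=
  ⟨if (d : ℕ) + 1 = k then k else d, by split_ifs <;> omega⟩

/-- The index `j + 1` of the image of `e_j` under `Dg[J_k(0), J_2(0)]`, where
`j = jordanSource d`. -/
def jordanTarget (d : Fin k) : Fin (k + 2) :=
  ⟨if (d : ℕ) + 1 = k then k + 1 else d + 1, by split_ifs <;> omega⟩

/-- The index through which the factorization of `Dg[J_k(0), J_2(0)]` passes on its way from
`jordanSource d` to `jordanTarget d`. -/
def jordanMid (d : Fin k) : Fin (k + 2) :=
  ⟨if (d : ℕ) + 1 = k then 0 else if (d : ℕ) + 2 = k then k + 1 else d + 2, by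
    split_ifs <;> omega⟩

theorem jordanSource_injective : (jordanSource (k := k)).Injective := by
  intro d d' h
  simp only [jordanSource, Fin.mk.injEq] at h
  grind

theorem jordanTarget_injective : (jordanTarget (k := k)).Injective := by
  intro d d' h
  simp only [jordanTarget, Fin.mk.injEq] at h
  grind

theorem jordanMid_injective : (jordanMid (k := k)).Injective := by
  intro d d' h
  simp only [jordanMid, Fin.mk.injEq] at h
  grind

theorem exists_jordanTarget_eq_and_jordanSource_eq_iff (hk : 0 < k) (i j : Fin (k + 2)) :
    (∃ d : Fin k, jordanTarget d = i ∧ jordanSource d = j) ↔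
      (i : ℕ) = j + 1 ∧ (j : ℕ) + 1 ≠ k := by
  simp only [jordanTarget, jordanSource, Fin.ext_iff]
  constructor
  · rintro ⟨d, hi, hj⟩
    grind
  · rintro ⟨hij, hj⟩
    by_cases hjk : (j : ℕ) = k
    · exact ⟨⟨k - 1, by omega⟩, by grind⟩
    · exact ⟨⟨j, by omega⟩, by grind⟩

variable (F : Type*) [Field F]

theorem reindex_fromBlocks_jordanBlock0_apply {l : ℕ} (i j : Fin (k + l)) :
    Matrix.reindex finSumFinEquiv finSumFinEquiv
        (Matrix.fromBlocks (jordanBlock0 F k) 0 0 (jordanBlock0 F l)) i j =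
      if (i : ℕ) = j + 1 ∧ (j : ℕ) + 1 ≠ k then 1 else 0 := by
  obtain ⟨i, rfl⟩ := finSumFinEquiv.surjective i
  obtain ⟨j, rfl⟩ := finSumFinEquiv.surjective j
  rcases i with i | i <;> rcases j with j | j <;> simp [jordanBlock0] <;> grind

theorem reindex_fromBlocks_jordanBlock0_eq_transferMatrix (hk : 0 < k) :
    Matrix.reindex finSumFinEquiv finSumFinEquiv
        (Matrix.fromBlocks (jordanBlock0 F k) 0 0 (jordanBlock0 F 2)) =
      transferMatrix F jordanTarget jordanSource := by
  ext i j
  rw [reindex_fromBlocks_jordanBlock0_apply,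
    transferMatrix_apply_of_injective _ jordanSource_injective]
  simp only [exists_jordanTarget_eq_and_jordanSource_eq_iff hk]

theorem isNilpotent_transferMatrix_jordanTarget_jordanMid :
    IsNilpotent (transferMatrix F (jordanTarget (k := k)) jordanMid) := by
  -- The position in the chain `0 → k + 1 → k - 1 → k - 2 → ⋯ → 1`, with a gap left for `k`.
  refine isNilpotent_transferMatrix (fun j => if (j : ℕ) = 0 then 0 else k + 2 - j) fun d => ?_
  simp only [jordanTarget, jordanMid]
  grind

theorem isNilpotent_transferMatrix_jordanMid_jordanSource :
    IsNilpotent (transferMatrix F (jordanMid (k := k)) jordanSource) := by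
  -- Every arrow increases the index, except for `k → 0`, whose source `k` is hit by no arrow.
  refine isNilpotent_transferMatrix (fun j => if (j : ℕ) = k then 0 else j + 1) fun d => ?_
  simp only [jordanMid, jordanSource]
  grind

end JordanSum

theorem jordan_k_2_product_of_nilpotents_general (F : Type*) [Field F] (k : ℕ) (hk : 0 < k) :
    ∃ N₁ N₂ : Matrix (Fin (k + 2)) (Fin (k + 2)) F,
      IsNilpotent N₁ ∧ IsNilpotent N₂ ∧
      Matrix.reindex finSumFinEquiv finSumFinEquiv
          (Matrix.fromBlocks (jordanBlock0 F k) 0 0 (jordanBlock0 F 2)) = N₁ * N₂ ∧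
      N₁.rank = k ∧ N₂.rank = k ∧
      (Matrix.reindex finSumFinEquiv finSumFinEquiv
          (Matrix.fromBlocks (jordanBlock0 F k) 0 0 (jordanBlock0 F 2))).rank = k := by
  have rank_eq {r c : Fin k → Fin (k + 2)} (hr : r.Injective) (hc : c.Injective) :
      (transferMatrix F r c).rank = k := by
    rw [rank_transferMatrix hr hc, Fintype.card_fin]
  rw [reindex_fromBlocks_jordanBlock0_eq_transferMatrix F hk]
  exact ⟨transferMatrix F jordanTarget jordanMid, transferMatrix F jordanMid jordanSource,
    isNilpotent_transferMatrix_jordanTarget_jordanMid F,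
    isNilpotent_transferMatrix_jordanMid_jordanSource F,
    (transferMatrix_mul_transferMatrix _ jordanMid_injective _).symm,
    rank_eq jordanTarget_injective jordanMid_injective,
    rank_eq jordanMid_injective jordanSource_injective,
    rank_eq jordanTarget_injective jordanSource_injective⟩

/-- **Lemma (Wu, corrected).** For `k` a positive odd integer, the block diagonal matrix
`Dg[J_k(0), J_2(0)]` is a product of two nilpotent matrices, each of rank equal to
`rank Dg[J_k(0), J_2(0)] = k`. -/
theorem jordan_k_2_product_of_nilpotents
    (F : Type*) [Field F] (k : ℕ) (hk : 0 < k) (hodd : Odd k) :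
    ∃ N₁ N₂ : Matrix (Fin (k + 2)) (Fin (k + 2)) F,
      IsNilpotent N₁ ∧ IsNilpotent N₂ ∧
      Matrix.reindex finSumFinEquiv finSumFinEquiv
          (Matrix.fromBlocks (jordanBlock0 F k) 0 0 (jordanBlock0 F 2)) = N₁ * N₂ ∧
      N₁.rank = k ∧ N₂.rank = k ∧
      (Matrix.reindex finSumFinEquiv finSumFinEquiv
          (Matrix.fromBlocks (jordanBlock0 F k) 0 0 (jordanBlock0 F 2))).rank = k :=
  jordan_k_2_product_of_nilpotents_general F k hk
end

section
/- Let F be a field. The 9×9 block matrix over F with block rows partitioned as (2, 7) and block columns partitioned as (7, 2), whose top-left 2×7 block is zero, top-right 2×2 block is J_2(0), bottom-left 7×7 block is J_7(0), and bottom-right 7×2 block is zero, is NOT nilpotent. -/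
/-!
Multiplication by `J_k(0)` moves every coordinate down by one place and puts a zero on top.
Suppose `n ≡ -1` and `m ≡ 1` modulo `d`. Then `[[0, J_n(0)], [J_m(0), 0]]` moves coordinate `j < m`
to `n + j + 1 ≡ j` and coordinate `m + j` to `j + 1 ≡ m + j`, so it preserves residues modulo `d`,
and it puts zeros in places `0` and `n ≡ -1`. For `d ≥ 3` the residue `1` differs from both `0`
and `-1`, hence the indicator vector of the residue class of `1` is fixed, which is impossible for
a nilpotent matrix. For `(m, n) = (7, 2)` take `d = 3`.
-/

open Matrix

theorem not_isNilpotent_of_mulVec_eq_self {ι R : Type*} [Fintype ι] [DecidableEq ι] [Semiring R]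
    {M : Matrix ι ι R} {v : ι → R} (hv : v ≠ 0) (hMv : M *ᵥ v = v) : ¬ IsNilpotent M := by
  have pow_mulVec (k : ℕ) : M ^ k *ᵥ v = v := by
    induction k with
    | zero => rw [pow_zero, one_mulVec]
    | succ k ih => rw [pow_succ, ← mulVec_mulVec, hMv, ih]
  rintro ⟨k, hk⟩
  exact hv (by rw [← pow_mulVec k, hk, zero_mulVec])

section JordanBlocks

variable {F : Type*} [Field F]

theorem jordanBlock0_mulVec_succ (k : ℕ) {u : ℕ → F} (hu : u 0 = 0) :
    jordanBlock0 F k *ᵥ (fun j : Fin k => u (j + 1)) = fun i : Fin k => u i := by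
  ext ⟨i, hi⟩
  cases i with
  | zero => simp [mulVec, dotProduct, jordanBlock0, hu]
  | succ i =>
    rw [mulVec, dotProduct, Finset.sum_eq_single ⟨i, by omega⟩]
    · simp [jordanBlock0]
    · intro j _ hj
      have hij : i ≠ j := fun h => hj (Fin.ext h.symm)
      simp [jordanBlock0, hij]
    · simp

variable {m n : ℕ} {w : ℕ → F}

theorem fromBlocks_jordanBlock0_mulVec (h_zero : w 0 = 0) (h_n : w n = 0)
    (shift_n : ∀ j, w (n + (j + 1)) = w j) (shift_m : ∀ j, w (m + j) = w (j + 1)) :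
    fromBlocks 0 (jordanBlock0 F n) (jordanBlock0 F m) 0 *ᵥ
        Sum.elim (fun j : Fin m => w j) (fun j : Fin n => w (m + j)) =
      Sum.elim (fun i : Fin n => w i) (fun i : Fin m => w (n + i)) := by
  have top := jordanBlock0_mulVec_succ n h_zero
  have bottom := jordanBlock0_mulVec_succ m (u := fun i => w (n + i)) h_n
  simp only [shift_n] at bottom
  simp only [fromBlocks_mulVec, Sum.elim_comp_inl, Sum.elim_comp_inr, zero_mulVec, zero_add,
    add_zero, shift_m, top, bottom]

theorem reindex_fromBlocks_jordanBlock0_mulVec (h_zero : w 0 = 0) (h_n : w n = 0)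
    (shift_n : ∀ j, w (n + (j + 1)) = w j) (shift_m : ∀ j, w (m + j) = w (j + 1)) :
    reindex finSumFinEquiv (finSumFinEquiv.trans (finCongr (Nat.add_comm m n)))
        (fromBlocks 0 (jordanBlock0 F n) (jordanBlock0 F m) 0) *ᵥ
      (fun x : Fin (n + m) => w x) = fun x : Fin (n + m) => w x := by
  rw [reindex_apply, submatrix_mulVec_equiv, Equiv.comp_symm_eq]
  convert fromBlocks_jordanBlock0_mulVec h_zero h_n shift_n shift_m using 2
  · ext (j | j) <;> simp [add_comm]
  · ext (i | i) <;> simp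

end JordanBlocks

theorem block_matrix_j7_j2_not_nilpotent_general (F : Type*) [Field F] {m n d : ℕ}
    (hd : 3 ≤ d) (hm : m ≡ 1 [MOD d]) (hn : d ∣ n + 1) :
    ¬ IsNilpotent
        (Matrix.reindex (finSumFinEquiv : Fin n ⊕ Fin m ≃ Fin (n + m))
          (finSumFinEquiv.trans (finCongr (Nat.add_comm m n)) : Fin m ⊕ Fin n ≃ Fin (n + m))
          (Matrix.fromBlocks (0 : Matrix (Fin n) (Fin m) F) (jordanBlock0 F n)
            (jordanBlock0 F m) (0 : Matrix (Fin m) (Fin n) F))) := by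
  let w : ℕ → F := fun x => if x ≡ 1 [MOD d] then 1 else 0
  have w_congr {a b : ℕ} (h : a ≡ b [MOD d]) : w a = w b :=
    if_congr ⟨h.symm.trans, h.trans⟩ rfl rfl
  have w_one : w 1 = 1 := if_pos rfl
  have w_zero : w 0 = 0 := if_neg fun h => by
    have hd_one : d ∣ 1 := (h.dvd_iff dvd_rfl).1 (dvd_zero d)
    have := Nat.le_of_dvd one_pos hd_one
    omega
  have w_n : w n = 0 := if_neg fun h => by
    have hd_two : d ∣ 2 := ((h.add_right 1).dvd_iff dvd_rfl).1 hn
    have := Nat.le_of_dvd two_pos hd_two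
    omega
  have shift_n (j : ℕ) : w (n + (j + 1)) = w j :=
    w_congr (by simpa [add_comm, add_left_comm] using (Nat.modEq_zero_iff_dvd.2 hn).add_right j)
  have shift_m (j : ℕ) : w (m + j) = w (j + 1) :=
    w_congr (by simpa only [add_comm] using hm.add_right j)
  have one_lt : 1 < n + m := by
    have := Nat.le_of_dvd n.succ_pos hn
    omega
  have w_ne_zero : (fun x : Fin (n + m) => w x) ≠ 0 := fun h =>
    one_ne_zero (w_one.symm.trans (congrFun h ⟨1, one_lt⟩))
  exact not_isNilpotent_of_mulVec_eq_self w_ne_zero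
    (reindex_fromBlocks_jordanBlock0_mulVec w_zero w_n shift_n shift_m)

/-- The `9 × 9` block matrix `[[0, J_2(0)], [J_7(0), 0]]` (row partition `(2,7)`,
column partition `(7,2)`) is not nilpotent; this witnesses the error in Wu's
original factorization of `Dg[J_7(0), J_2(0)]`. -/
theorem block_matrix_j7_j2_not_nilpotent (F : Type*) [Field F] :
    ¬ IsNilpotent
        (Matrix.reindex (finSumFinEquiv : Fin 2 ⊕ Fin 7 ≃ Fin 9)
          (finSumFinEquiv : Fin 7 ⊕ Fin 2 ≃ Fin 9)
          (Matrix.fromBlocks (0 : Matrix (Fin 2) (Fin 7) F) (jordanBlock0 F 2)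
            (jordanBlock0 F 7) (0 : Matrix (Fin 7) (Fin 2) F))) :=
  block_matrix_j7_j2_not_nilpotent_general F (m := 7) (n := 2) le_rfl (by decide) dvd_rfl
end

section
/- Let F be a field and n a positive integer with n ≠ 2. Every nilpotent n×n matrix N over F is similar over F to a product N₁N₂ of two nilpotent n×n matrices, where the first row and the last column of the left factor N₁ are both the zero vector, and the last row of the right factor N₂ is either the zero vector or the vector e₁ᵀ (the row vector with a one in the first entry and zeros elsewhere). -/
/-!
Split a Jordan block off the nilpotent endomorphism and argue by induction on the dimension. The
property that passes to direct sums is the existence of a factorization `N = A * B` into nilpotent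
endomorphisms with `ker A ⊄ range B`: a vector `e ∈ ker A` and a functional `ψ` with `ψ ∘ B = 0`
and `ψ e = 1` give room to absorb a Jordan block of size two, which has no such factorization
itself, and two blocks of size two are factored together. For a block of size at least three, such
a factorization is built from that of a block smaller by two, starting from sizes three and four.

Since `A` is nilpotent and `A e = 0`, some nonzero functional `φ` vanishes on `range A` and on `e`.
In a basis whose last vector is `e` and whose first and last coordinates are `φ` and `ψ`, the
factors `A` and `B` have the required zero rows and column; the last row of the right factor is
always zero.
-/

open Module

section Nilpotent

variable {F V W : Type*} [Field F] [AddCommGroup V] [Module F V] [AddCommGroup W] [Module F W]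

theorem exists_pow_succ_eq_zero_and_dual_pow_apply_eq_one [Nontrivial V] {N : End F V}
    (hN : IsNilpotent N) :
    ∃ (m : ℕ) (v : V) (φ : Dual F V), N ^ (m + 1) = 0 ∧ φ ((N ^ m) v) = 1 := by
  obtain ⟨m, hm⟩ := Nat.exists_eq_succ_of_ne_zero (pos_nilpotencyClass_iff.2 hN).ne'
  have hNm : N ^ m ≠ 0 := by simpa [hm] using pow_pred_nilpotencyClass hN
  obtain ⟨v, hv⟩ := DFunLike.exists_ne hNm
  obtain ⟨φ, hφ⟩ := Projective.exists_dual_eq_one F hv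
  exact ⟨m, v, φ, by simpa [hm] using pow_nilpotencyClass hN, hφ⟩

theorem exists_dual_ne_zero_comp_eq_zero [Nontrivial V] {N : End F V} (hN : IsNilpotent N) :
    ∃ φ : Dual F V, φ ≠ 0 ∧ φ ∘ₗ N = 0 := by
  obtain ⟨m, v, φ, hm, hφ⟩ := exists_pow_succ_eq_zero_and_dual_pow_apply_eq_one hN
  refine ⟨φ ∘ₗ N ^ m, fun h => ?_, ?_⟩
  · simpa [hφ] using LinearMap.congr_fun h v
  · rw [LinearMap.comp_assoc, ← End.mul_eq_comp, ← pow_succ, hm, LinearMap.comp_zero]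

theorem exists_dual_ne_zero_comp_eq_zero_apply_eq_zero (hV : 1 < finrank F V)
    {N : End F V} (hN : IsNilpotent N) {e : V} (he : N e = 0) :
    ∃ φ : Dual F V, φ ≠ 0 ∧ φ ∘ₗ N = 0 ∧ φ e = 0 := by
  have hspan : F ∙ e ≤ (F ∙ e).comap N := by simp [Submodule.span_singleton_le_iff_mem, he]
  have hne : F ∙ e ≠ ⊤ := fun h => hV.not_ge <|
    finrank_le_one e fun x => Submodule.mem_span_singleton.1 (h ▸ Submodule.mem_top)
  have : Nontrivial (V ⧸ F ∙ e) := Submodule.Quotient.nontrivial_iff.2 hne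
  obtain ⟨φ, hφ, hφN⟩ := exists_dual_ne_zero_comp_eq_zero (End.IsNilpotent.mapQ hspan hN)
  refine ⟨φ ∘ₗ (F ∙ e).mkQ, fun h => hφ ?_, ?_, ?_⟩
  · exact Submodule.linearMap_qext _ h
  · rw [LinearMap.comp_assoc, ← Submodule.mapQ_mkQ _ _ N (h := hspan), ← LinearMap.comp_assoc, hφN,
      LinearMap.zero_comp]
  · rw [LinearMap.comp_apply, Submodule.mkQ_apply,
      (Submodule.Quotient.mk_eq_zero _).2 (Submodule.mem_span_singleton_self e), map_zero]

theorem injective_of_disjoint_ker {N : End F V} {M : End F W} {f : V →ₗ[F] W}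
    (hN : IsNilpotent N) (hf : f ∘ₗ N = M ∘ₗ f)
    (hdisj : Disjoint (LinearMap.ker N) (LinearMap.ker f)) : Function.Injective f := by
  obtain ⟨m, hm⟩ := hN
  have hzero (n : ℕ) : ∀ x, (N ^ n) x = 0 → f x = 0 → x = 0 := by
    induction n with
    | zero => simp
    | succ n ih =>
      intro x hx hfx
      have hNx : N x = 0 := by
        refine ih _ (by simpa [pow_succ] using hx) ?_
        simpa [hfx] using LinearMap.congr_fun hf x
      exact Submodule.disjoint_def.1 hdisj x hNx hfx
  exact (injective_iff_map_eq_zero f).2 fun x => hzero m x (by simp [hm])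

theorem isNilpotent_of_ker_le_range {U : Type*} [AddCommGroup U] [Module F U]
    {L : End F U} {N : End F V} {M : End F W} {i : U →ₗ[F] V} {p : V →ₗ[F] W}
    (hip : LinearMap.ker p ≤ LinearMap.range i) (hi : N ∘ₗ i = i ∘ₗ L) (hp : M ∘ₗ p = p ∘ₗ N)
    (hL : IsNilpotent L) (hM : IsNilpotent M) : IsNilpotent N := by
  obtain ⟨l, hl⟩ := hL
  obtain ⟨m, hm⟩ := hM
  refine ⟨l + m, LinearMap.ext fun x => ?_⟩
  obtain ⟨y, hy⟩ : (N ^ m) x ∈ LinearMap.range i := hip <| by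
    rw [LinearMap.mem_ker, ← LinearMap.comp_apply, ← End.commute_pow_left_of_commute hp, hm,
      LinearMap.zero_comp, LinearMap.zero_apply]
  rw [pow_add, End.mul_apply, ← hy, ← LinearMap.comp_apply,
    End.commute_pow_left_of_commute hi, hl, LinearMap.comp_zero, LinearMap.zero_apply,
    LinearMap.zero_apply]

theorem isNilpotent_iff_forall_mem_maxGenEigenspace_zero [FiniteDimensional F V] {N : End F V} :
    IsNilpotent N ↔ ∀ x, x ∈ N.maxGenEigenspace 0 := by
  simp [End.isNilpotent_iff_of_finite, End.mem_maxGenEigenspace]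

theorem mem_maxGenEigenspace_zero_of_apply_mem {N : End F V} {x : V}
    (h : N x ∈ N.maxGenEigenspace 0) : x ∈ N.maxGenEigenspace 0 := by
  simp only [End.mem_maxGenEigenspace, zero_smul, sub_zero] at h ⊢
  obtain ⟨k, hk⟩ := h
  exact ⟨k + 1, by rwa [pow_succ]⟩

theorem map_mem_maxGenEigenspace_zero {A : End F W} (hA : IsNilpotent A) {N : End F V}
    (f : W →ₗ[F] V) {y : W}
    (h : ∀ n, N (f ((A ^ n) y)) - f ((A ^ (n + 1)) y) ∈ N.maxGenEigenspace 0) :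
    f y ∈ N.maxGenEigenspace 0 := by
  obtain ⟨m, hm⟩ := hA
  -- Descending induction on `n`, starting from `A ^ m = 0`.
  have hpow (j : ℕ) : ∀ n, m ≤ n + j → f ((A ^ n) y) ∈ N.maxGenEigenspace 0 := by
    induction j with
    | zero =>
      intro n hn
      rw [pow_eq_zero_of_le (by simpa using hn) hm, LinearMap.zero_apply, map_zero]
      exact zero_mem _
    | succ j ih =>
      intro n hn
      refine mem_maxGenEigenspace_zero_of_apply_mem ?_
      simpa using add_mem (h n) (ih (n + 1) (by omega))
  simpa using hpow m 0 (by omega)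

theorem exists_conj_prodMap_restrict_ker_eq {M : End F W} {N : End F V} {Ψ : W →ₗ[F] V}
    {Φ : V →ₗ[F] W} (hΨ : N ∘ₗ Ψ = Ψ ∘ₗ M) (hΦ : Φ ∘ₗ N = M ∘ₗ Φ)
    (hbij : Function.Bijective (Φ ∘ₗ Ψ)) :
    ∃ (hker : ∀ x ∈ LinearMap.ker Φ, N x ∈ LinearMap.ker Φ)
      (T : (W × LinearMap.ker Φ) ≃ₗ[F] V), T.conj (M.prodMap (N.restrict hker)) = N := by
  have hker (x : V) (hx : x ∈ LinearMap.ker Φ) : N x ∈ LinearMap.ker Φ := by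
    simpa [LinearMap.mem_ker.1 hx] using LinearMap.congr_fun hΦ x
  have hinj : Function.Injective (Ψ.coprod (LinearMap.ker Φ).subtype) := by
    refine (injective_iff_map_eq_zero _).2 fun x hx => ?_
    rw [LinearMap.coprod_apply, Submodule.subtype_apply] at hx
    have h₁ : x.1 = 0 := (map_eq_zero_iff _ hbij.1).1 (by simpa using congr_arg Φ hx)
    have h₂ : x.2 = 0 := by simpa [h₁] using hx
    exact Prod.ext h₁ h₂
  have hsurj : Function.Surjective (Ψ.coprod (LinearMap.ker Φ).subtype) := fun x => by
    obtain ⟨c, hc⟩ := hbij.2 (Φ x)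
    exact ⟨(c, ⟨x - Ψ c, by simpa [sub_eq_zero] using hc.symm⟩), by simp⟩
  refine ⟨hker, LinearEquiv.ofBijective _ ⟨hinj, hsurj⟩, ?_⟩
  rw [LinearEquiv.conj_apply, LinearEquiv.comp_toLinearMap_symm_eq]
  refine LinearMap.ext fun x => ?_
  change Ψ (M x.1) + N x.2 = N (Ψ x.1 + x.2)
  rw [map_add, ← LinearMap.comp_apply, ← hΨ, LinearMap.comp_apply]

end Nilpotent

section JordanBlock

/-- The nilpotent Jordan block of size `k + 1`: it sends each standard basis vector to the next
one, and the last one to zero. -/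
def jordanBlock (F : Type*) [Field F] (k : ℕ) : End F (Fin (k + 1) → F) :=
  LinearMap.pi (Fin.cons 0 fun i => LinearMap.proj i.castSucc)

variable {F : Type*} [Field F] {k : ℕ}

@[simp]
theorem jordanBlock_apply_zero (x : Fin (k + 1) → F) : jordanBlock F k x 0 = 0 := rfl

@[simp]
theorem jordanBlock_apply_succ (x : Fin (k + 1) → F) (i : Fin k) :
    jordanBlock F k x i.succ = x i.castSucc := rfl

theorem jordanBlock_zero : jordanBlock F 0 = 0 :=
  LinearMap.ext fun _ => funext <| Fin.cases rfl fun i => i.elim0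

theorem isNilpotent_jordanBlock : IsNilpotent (jordanBlock F k) := by
  have hpow (n : ℕ) (x : Fin (k + 1) → F) :
      ∀ i : Fin (k + 1), (i : ℕ) < n → (jordanBlock F k ^ n) x i = 0 := by
    induction n with
    | zero => simp
    | succ n ih =>
      intro i hi
      rw [pow_succ', End.mul_apply]
      cases i using Fin.cases with
      | zero => rfl
      | succ i => exact ih i.castSucc (by simpa using hi)
  exact ⟨k + 1, LinearMap.ext fun x => funext fun i => hpow _ x i i.isLt⟩

theorem eq_single_last_of_jordanBlock_apply_eq_zero {x : Fin (k + 1) → F}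
    (hx : jordanBlock F k x = 0) : x = Pi.single (Fin.last k) (x (Fin.last k)) := by
  refine funext (Fin.lastCases (by simp) fun i => ?_)
  rw [Pi.single_eq_of_ne (Fin.castSucc_lt_last i).ne]
  exact congr_fun hx i.succ

theorem exists_conj_jordanBlock_prodMap_eq {V : Type*} [AddCommGroup V] [Module F V] [Nontrivial V]
    {N : End F V} (hN : IsNilpotent N) :
    ∃ (k : ℕ) (U : Submodule F V) (hU : ∀ x ∈ U, N x ∈ U)
      (T : ((Fin (k + 1) → F) × U) ≃ₗ[F] V),
      T.conj ((jordanBlock F k).prodMap (N.restrict hU)) = N := by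
  obtain ⟨k, v, φ, hk, hφ⟩ := exists_pow_succ_eq_zero_and_dual_pow_apply_eq_one hN
  -- The Jordan chain of `v`, and dually that of `φ` under the transpose of `N`; the kernel of the
  -- latter is an invariant complement of the span of the former.
  let Ψ : (Fin (k + 1) → F) →ₗ[F] V := Fintype.linearCombination F fun i => (N ^ (i : ℕ)) v
  let Φ : V →ₗ[F] (Fin (k + 1) → F) := LinearMap.pi fun i => φ ∘ₗ N ^ (k - i)
  have hNk (x : V) : N ((N ^ k) x) = 0 := by
    rw [← End.mul_apply, ← pow_succ', hk, LinearMap.zero_apply]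
  have hΨ : N ∘ₗ Ψ = Ψ ∘ₗ jordanBlock F k := LinearMap.ext fun c => by
    rw [LinearMap.comp_apply, LinearMap.comp_apply, Fintype.linearCombination_apply,
      Fintype.linearCombination_apply, Fin.sum_univ_castSucc, Fin.sum_univ_succ]
    simp [pow_succ', hNk]
  have hΦ : Φ ∘ₗ N = jordanBlock F k ∘ₗ Φ := LinearMap.ext fun x => funext <| Fin.cases
    (by simp [Φ, ← End.mul_apply, ← pow_succ, hk]) fun i => by
      simp [Φ, ← End.mul_apply, ← pow_succ, show k - (i + 1) + 1 = k - i by omega]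
  have hlast : Φ (Ψ (Pi.single (Fin.last k) 1)) (Fin.last k) = 1 := by
    simp [Φ, Ψ, Fintype.linearCombination_apply_single, hφ]
  have hinj : Function.Injective (Φ ∘ₗ Ψ) := by
    refine injective_of_disjoint_ker (M := jordanBlock F k) isNilpotent_jordanBlock ?_ ?_
    · rw [LinearMap.comp_assoc, ← hΨ, ← LinearMap.comp_assoc, hΦ, LinearMap.comp_assoc]
    · refine Submodule.disjoint_def.2 fun x hx hΦΨ => ?_
      have hx' := eq_single_last_of_jordanBlock_apply_eq_zero hx
      have hsmul : x = x (Fin.last k) • Pi.single (Fin.last k) (1 : F) := by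
        rwa [← Pi.single_smul', smul_eq_mul, mul_one]
      have hzero : x (Fin.last k) = 0 := by
        rw [LinearMap.mem_ker, hsmul, map_smul] at hΦΨ
        simpa [hlast] using congr_fun hΦΨ (Fin.last k)
      rw [hx', hzero, Pi.single_zero]
  obtain ⟨hker, T, hT⟩ := exists_conj_prodMap_restrict_ker_eq hΨ hΦ
    ⟨hinj, LinearMap.injective_iff_surjective.1 hinj⟩
  exact ⟨k, _, hker, T, hT⟩

end JordanBlock

section NilpotentFactorization

/-- A factorization `N = A * B` into nilpotent endomorphisms such that the kernel of `A` is not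
contained in the range of `B`, as witnessed by `e` and `ψ`. -/
structure IsNilpotentFactorization {F V : Type*} [Field F] [AddCommGroup V] [Module F V]
    (N A B : End F V) (e : V) (ψ : Dual F V) : Prop where
  isNilpotent_left : IsNilpotent A
  isNilpotent_right : IsNilpotent B
  eq_mul : N = A * B
  left_apply_e : A e = 0
  psi_comp_right : ψ ∘ₗ B = 0
  psi_apply_e : ψ e = 1

/-- `N` has a factorization `N = A * B` into nilpotent endomorphisms with `ker A ⊄ range B`. -/
def HasNilpotentFactorization {F V : Type*} [Field F] [AddCommGroup V] [Module F V]
    (N : End F V) : Prop :=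
  ∃ (A B : End F V) (e : V) (ψ : Dual F V), IsNilpotentFactorization N A B e ψ

/-- `N` has rank one and square zero; in dimension two these are the nonzero nilpotents. -/
def IsSquareZeroRankOne {F V : Type*} [Field F] [AddCommGroup V] [Module F V]
    (N : End F V) : Prop :=
  ∃ (χ : Dual F V) (v : V), χ ≠ 0 ∧ v ≠ 0 ∧ χ v = 0 ∧ N = χ.smulRight v

variable {F V W : Type*} [Field F] [AddCommGroup V] [Module F V] [AddCommGroup W] [Module F W]

theorem IsNilpotentFactorization.conj {N A B : End F V} {e : V} {ψ : Dual F V}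
    (h : IsNilpotentFactorization N A B e ψ) (T : V ≃ₗ[F] W) :
    IsNilpotentFactorization (T.conj N) (T.conj A) (T.conj B) (T e) (ψ ∘ₗ T.symm) where
  isNilpotent_left := h.isNilpotent_left.map T.conjRingEquiv
  isNilpotent_right := h.isNilpotent_right.map T.conjRingEquiv
  eq_mul := by rw [h.eq_mul]; exact map_mul T.conjRingEquiv A B
  left_apply_e := by simp [LinearEquiv.conj_apply, h.left_apply_e]
  psi_comp_right := LinearMap.ext fun x => by
    simpa [LinearEquiv.conj_apply] using LinearMap.congr_fun h.psi_comp_right (T.symm x)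
  psi_apply_e := by simpa using h.psi_apply_e

theorem HasNilpotentFactorization.conj {N : End F V} (h : HasNilpotentFactorization N)
    (T : V ≃ₗ[F] W) : HasNilpotentFactorization (T.conj N) := by
  obtain ⟨A, B, e, ψ, h⟩ := h
  exact ⟨_, _, _, _, h.conj T⟩

theorem IsSquareZeroRankOne.conj {N : End F V} (h : IsSquareZeroRankOne N)
    (T : V ≃ₗ[F] W) : IsSquareZeroRankOne (T.conj N) := by
  obtain ⟨χ, v, hχ, hv, hχv, rfl⟩ := h
  refine ⟨χ ∘ₗ T.symm, T v, fun h => hχ ?_, by simpa using hv, by simpa using hχv, ?_⟩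
  · exact LinearMap.ext fun x => by simpa using LinearMap.congr_fun h (T x)
  · exact LinearMap.ext fun x => by simp [LinearEquiv.conj_apply]

theorem hasNilpotentFactorization_zero [Nontrivial V] :
    HasNilpotentFactorization (0 : End F V) := by
  obtain ⟨e, he⟩ := exists_ne (0 : V)
  obtain ⟨ψ, hψ⟩ := Projective.exists_dual_eq_one F he
  exact ⟨0, 0, e, ψ, .zero, .zero, by simp, by simp, by simp, hψ⟩

theorem isNilpotent_prodMap {A : End F V} {B : End F W} (hA : IsNilpotent A)
    (hB : IsNilpotent B) : IsNilpotent (A.prodMap B : End F (V × W)) :=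
  isNilpotent_of_ker_le_range (i := .inl F V W) (p := .snd F V W) (LinearMap.ker_snd F V W).le
    (by ext <;> simp) (by ext <;> simp) hA hB

theorem HasNilpotentFactorization.prodMap {N : End F V} {M : End F W}
    (hN : HasNilpotentFactorization N) (hM : HasNilpotentFactorization M) :
    HasNilpotentFactorization (N.prodMap M : End F (V × W)) := by
  obtain ⟨A, B, e, ψ, hN⟩ := hN
  obtain ⟨A', B', _, _, hM⟩ := hM
  refine ⟨A.prodMap A', B.prodMap B', (e, 0), ψ ∘ₗ .fst F V W,
    isNilpotent_prodMap hN.isNilpotent_left hM.isNilpotent_left,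
    isNilpotent_prodMap hN.isNilpotent_right hM.isNilpotent_right, ?_, ?_, ?_, ?_⟩
  · rw [hN.eq_mul, hM.eq_mul, LinearMap.prodMap_mul]
  · simp [hN.left_apply_e]
  · exact LinearMap.ext fun x => LinearMap.congr_fun hN.psi_comp_right x.1
  · simpa using hN.psi_apply_e

theorem IsSquareZeroRankOne.prodMap_hasNilpotentFactorization {M : End F V} {N : End F W}
    (hM : IsSquareZeroRankOne M) (hN : HasNilpotentFactorization N) :
    HasNilpotentFactorization (M.prodMap N : End F (V × W)) := by
  obtain ⟨χ, v, -, hv, -, rfl⟩ := hM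
  obtain ⟨A, B, e, ψ, hN⟩ := hN
  obtain ⟨α, hα⟩ := Projective.exists_dual_eq_one F hv
  have hψB (x : W) : ψ (B x) = 0 := LinearMap.congr_fun hN.psi_comp_right x
  let A' : End F (V × W) := (ψ.smulRight v ∘ₗ .snd F V W).prod (A ∘ₗ .snd F V W)
  let B' : End F (V × W) :=
    LinearMap.prod 0 (B ∘ₗ .snd F V W + χ.smulRight e ∘ₗ .fst F V W)
  have hA' : IsNilpotent A' :=
    isNilpotent_of_ker_le_range (L := 0) (i := .inl F V W) (p := .snd F V W)
      (LinearMap.ker_snd F V W).le (by ext <;> simp [A']) (by ext <;> simp [A'])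
      .zero hN.isNilpotent_left
  have hB' : IsNilpotent B' :=
    isNilpotent_of_ker_le_range (M := 0) (i := .inr F V W) (p := .fst F V W)
      (LinearMap.ker_fst F V W).le (by ext <;> simp [B']) (by ext <;> simp [B'])
      hN.isNilpotent_right .zero
  refine ⟨A', B', (v, 0), α ∘ₗ .fst F V W, hA', hB', LinearMap.ext fun x => ?_, ?_, ?_, ?_⟩
  · simp [A', B', hψB, hN.eq_mul, hN.left_apply_e, hN.psi_apply_e]
  · simp [A']
  · ext <;> simp [B']
  · simpa using hα

theorem IsSquareZeroRankOne.prodMap {M : End F V} {N : End F W}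
    (hM : IsSquareZeroRankOne M) (hN : IsSquareZeroRankOne N) :
    HasNilpotentFactorization (M.prodMap N : End F (V × W)) := by
  obtain ⟨χ, v, -, hv, hχv, rfl⟩ := hM
  obtain ⟨ξ, w, hξ, hw, hξw, rfl⟩ := hN
  obtain ⟨α, hα⟩ := Projective.exists_dual_eq_one F hv
  obtain ⟨β, hβ⟩ := Projective.exists_dual_eq_one F hw
  obtain ⟨g, hg⟩ : ∃ g, ξ g = 1 := LinearMap.surjective hξ 1
  let A : End F (V × W) :=
    (ξ.smulRight v ∘ₗ .snd F V W).prod (α.smulRight w ∘ₗ .fst F V W)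
  let B : End F (V × W) :=
    (ξ.smulRight v ∘ₗ .snd F V W).prod (χ.smulRight g ∘ₗ .fst F V W)
  have hA : A ^ 3 = 0 := LinearMap.ext fun x => by simp [A, pow_succ, hα, hξw]
  have hB : B ^ 3 = 0 := LinearMap.ext fun x => by simp [B, pow_succ, hg, hχv]
  refine ⟨A, B, (0, w), (β - β g • ξ) ∘ₗ .snd F V W, ⟨3, hA⟩, ⟨3, hB⟩,
    LinearMap.ext fun x => ?_, ?_, LinearMap.ext fun x => ?_, ?_⟩
  · simp [A, B, hα, hg]
  · simp [A, hξw]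
  · simp [B, hg]
  · simp [hβ, hξw]

end NilpotentFactorization

section ChainExtension

/-- A nilpotent factorization of `N` together with a functional `β` allowing it to be extended
along a Jordan chain ending in `b`; see `HasExtendableFactorization.chainExtension`. -/
structure IsExtendableFactorization {F V : Type*} [Field F] [AddCommGroup V] [Module F V]
    (N A B : End F V) (e b : V) (ψ β : Dual F V) : Prop
    extends IsNilpotentFactorization N A B e ψ where
  beta_comp_left : β ∘ₗ A = 0
  beta_apply_b : β b = 1
  beta_apply_e : β e = 0
  psi_apply_b : ψ b = 0
  beta_pow_right_apply_b : ∀ i, β ((B ^ (i + 1)) b) = 0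

/-- `N` has a nilpotent factorization that extends along Jordan chains ending in `b`. -/
def HasExtendableFactorization {F V : Type*} [Field F] [AddCommGroup V] [Module F V]
    (N : End F V) (b : V) : Prop :=
  ∃ (A B : End F V) (e : V) (ψ β : Dual F V), IsExtendableFactorization N A B e b ψ β

/-- The extension of `N` to `V × F × F` by a chain `q ↦ p ↦ b` of two new basis vectors
`p = (0, 1, 0)` and `q = (0, 0, 1)`. -/
def chainExtension {F V : Type*} [Field F] [AddCommGroup V] [Module F V]
    (N : End F V) (b : V) : End F (V × F × F) where
  toFun x := (N x.1 + x.2.1 • b, x.2.2, 0)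
  map_add' x y := by
    ext <;> simp [add_smul]
    abel
  map_smul' c x := by ext <;> simp [mul_smul]

variable {F V W : Type*} [Field F] [AddCommGroup V] [Module F V] [AddCommGroup W] [Module F W]

theorem HasExtendableFactorization.hasNilpotentFactorization {N : End F V} {b : V}
    (h : HasExtendableFactorization N b) : HasNilpotentFactorization N := by
  obtain ⟨A, B, e, ψ, β, h⟩ := h
  exact ⟨A, B, e, ψ, h.toIsNilpotentFactorization⟩

theorem HasExtendableFactorization.conj {N : End F V} {b : V}
    (h : HasExtendableFactorization N b) (T : V ≃ₗ[F] W) :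
    HasExtendableFactorization (T.conj N) (T b) := by
  obtain ⟨A, B, e, ψ, β, h⟩ := h
  refine ⟨T.conj A, T.conj B, T e, ψ ∘ₗ T.symm, β ∘ₗ T.symm,
    ⟨h.toIsNilpotentFactorization.conj T, ?_, ?_, ?_, ?_, fun i => ?_⟩⟩
  · exact LinearMap.ext fun x => by
      simpa [LinearEquiv.conj_apply] using LinearMap.congr_fun h.beta_comp_left (T.symm x)
  · simpa using h.beta_apply_b
  · simpa using h.beta_apply_e
  · simpa using h.psi_apply_b
  · have hpow : T.conj (B ^ (i + 1)) = T.conj B ^ (i + 1) := map_pow T.conjRingEquiv B _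
    rw [← hpow]
    simpa [LinearEquiv.conj_apply] using h.beta_pow_right_apply_b i

/-- The left factor of `chainExtension N b`, where `N = A * B`: under the conditions of
`IsExtendableFactorization` it sends `q ↦ A b`, `e ↦ b ↦ p ↦ 0`. -/
def chainExtensionLeft (A : End F V) (b : V) (ψ β : Dual F V) : End F (V × F × F) where
  toFun x := (A x.1 + (x.2.2 - β x.1) • A b + ψ x.1 • b, β x.1, 0)
  map_add' x y := by
    ext <;> simp [add_smul, sub_smul]
    abel
  map_smul' c x := by ext <;> simp [mul_smul, ← mul_sub]

/-- The right factor of `chainExtension N b`, where `N = A * B`: it sends `q ↦ b` and `p ↦ e`, and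
trades the `b`-component of `B x`, as measured by `β`, for a multiple of `q`. -/
def chainExtensionRight (B : End F V) (e b : V) (β : Dual F V) : End F (V × F × F) where
  toFun x := (B x.1 + (x.2.2 - β (B x.1)) • b + x.2.1 • e, 0, β (B x.1))
  map_add' x y := by
    ext <;> simp [add_smul, sub_smul]
    abel
  map_smul' c x := by ext <;> simp [mul_smul, ← mul_sub]

namespace IsExtendableFactorization

variable {N A B : End F V} {e b : V} {ψ β : Dual F V}

theorem isNilpotent_chainExtensionLeft [FiniteDimensional F V]
    (h : IsExtendableFactorization N A B e b ψ β) :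
    IsNilpotent (chainExtensionLeft A b ψ β) := by
  set A' := chainExtensionLeft A b ψ β
  have happly (x : V) (s t : F) :
      A' (x, s, t) = (A x + (t - β x) • A b + ψ x • b, β x, 0) := rfl
  have hβA (x : V) : β (A x) = 0 := LinearMap.congr_fun h.beta_comp_left x
  have hp (s : F) : ((0, s, 0) : V × F × F) ∈ A'.maxGenEigenspace 0 :=
    mem_maxGenEigenspace_zero_of_apply_mem <| by
      simp only [happly, map_zero, sub_zero, zero_smul, add_zero]
      exact zero_mem _
  have hb (c : F) : ((c • b, 0, 0) : V × F × F) ∈ A'.maxGenEigenspace 0 :=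
    mem_maxGenEigenspace_zero_of_apply_mem <| by
      simpa [happly, h.beta_apply_b, h.psi_apply_b] using hp c
  have hker (y : V) (hy : β y = 0) : ((y, 0, 0) : V × F × F) ∈ A'.maxGenEigenspace 0 :=
    map_mem_maxGenEigenspace_zero h.isNilpotent_left (.inl F V (F × F)) fun n => by
      have hβn : β ((A ^ n) y) = 0 := by
        cases n with
        | zero => simpa using hy
        | succ n => rw [pow_succ', End.mul_apply, hβA]
      simpa [happly, hβn, pow_succ'] using hb (ψ ((A ^ n) y))
  have hq (t : F) : ((0, 0, t) : V × F × F) ∈ A'.maxGenEigenspace 0 :=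
    mem_maxGenEigenspace_zero_of_apply_mem <| by
      simpa [happly] using hker (t • A b) (by simp [hβA])
  refine isNilpotent_iff_forall_mem_maxGenEigenspace_zero.2 fun ⟨x, s, t⟩ => ?_
  have hx := hker (x - β x • b) (by simp [h.beta_apply_b])
  simpa using add_mem (add_mem (add_mem hx (hb (β x))) (hp s)) (hq t)

theorem isNilpotent_chainExtensionRight [FiniteDimensional F V]
    (h : IsExtendableFactorization N A B e b ψ β) :
    IsNilpotent (chainExtensionRight B e b β) := by
  set B' := chainExtensionRight B e b β
  have happly (x : V) (s t : F) :
      B' (x, s, t) = (B x + (t - β (B x)) • b + s • e, 0, β (B x)) := rfl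
  have hBb : ((B b, 0, 0) : V × F × F) ∈ B'.maxGenEigenspace 0 :=
    map_mem_maxGenEigenspace_zero h.isNilpotent_right (.inl F V (F × F)) fun n => by
      have hβn : β (B ((B ^ n) (B b))) = 0 := by
        rw [← End.mul_apply, ← End.mul_apply, ← pow_succ', ← pow_succ]
        exact h.beta_pow_right_apply_b (n + 1)
      simp [happly, hβn, pow_succ', -End.mem_maxGenEigenspace, zero_mem, ← Prod.zero_eq_mk]
  have hb : ((b, 0, 0) : V × F × F) ∈ B'.maxGenEigenspace 0 :=
    mem_maxGenEigenspace_zero_of_apply_mem <| by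
      have hβ : β (B b) = 0 := by simpa using h.beta_pow_right_apply_b 0
      simpa [happly, hβ] using hBb
  have hq : ((0, 0, 1) : V × F × F) ∈ B'.maxGenEigenspace 0 :=
    mem_maxGenEigenspace_zero_of_apply_mem <| by simpa [happly] using hb
  have hV (x : V) : ((x, 0, 0) : V × F × F) ∈ B'.maxGenEigenspace 0 :=
    map_mem_maxGenEigenspace_zero h.isNilpotent_right (.inl F V (F × F)) fun n => by
      simpa [happly, pow_succ', sub_eq_add_neg] using
        Submodule.smul_mem _ (β (B ((B ^ n) x))) (sub_mem hq hb)
  have hp : ((0, 1, 0) : V × F × F) ∈ B'.maxGenEigenspace 0 :=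
    mem_maxGenEigenspace_zero_of_apply_mem <| by simpa [happly] using hV e
  refine isNilpotent_iff_forall_mem_maxGenEigenspace_zero.2 fun ⟨x, s, t⟩ => ?_
  simpa using add_mem (add_mem (hV x) (Submodule.smul_mem _ s hp)) (Submodule.smul_mem _ t hq)

theorem chainExtension_eq_mul (h : IsExtendableFactorization N A B e b ψ β) :
    chainExtension N b = chainExtensionLeft A b ψ β * chainExtensionRight B e b β := by
  have hψB (x : V) : ψ (B x) = 0 := LinearMap.congr_fun h.psi_comp_right x
  refine LinearMap.ext fun x => ?_
  suffices A (B x.1) + x.2.1 • b =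
      A (B x.1) + (x.2.2 - β (B x.1)) • A b + (β (B x.1) - x.2.2) • A b + x.2.1 • b by
    simpa [chainExtension, chainExtensionLeft, chainExtensionRight, h.eq_mul, hψB, h.left_apply_e,
      h.psi_apply_e, h.beta_apply_b, h.beta_apply_e, h.psi_apply_b] using this
  module

end IsExtendableFactorization

theorem HasExtendableFactorization.chainExtension [FiniteDimensional F V] {N : End F V} {b : V}
    (h : HasExtendableFactorization N b) :
    HasExtendableFactorization (chainExtension N b) (0, 0, 1) := by
  obtain ⟨A, B, e, ψ, β, h⟩ := h
  have hpow (i : ℕ) :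
      (chainExtensionRight B e b β ^ (i + 1)) (0, 0, 1) = ((B ^ i) b, 0, 0) := by
    induction i with
    | zero => simp [chainExtensionRight]
    | succ i ih =>
      have hβ : β (B ((B ^ i) b)) = 0 := by simpa [pow_succ'] using h.beta_pow_right_apply_b i
      rw [pow_succ', End.mul_apply, ih]
      simp [chainExtensionRight, hβ, pow_succ']
  refine ⟨chainExtensionLeft A b ψ β, chainExtensionRight B e b β, (0, 1, 0),
    .fst F F F ∘ₗ .snd F V (F × F), .snd F F F ∘ₗ .snd F V (F × F), ⟨⟨
      h.isNilpotent_chainExtensionLeft, h.isNilpotent_chainExtensionRight,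
      h.chainExtension_eq_mul, ?_, ?_, ?_⟩, ?_, ?_, ?_, ?_, fun i => ?_⟩⟩
  · simp [chainExtensionLeft]
  · rfl
  · rfl
  · rfl
  · rfl
  · rfl
  · rfl
  · simp [hpow]

end ChainExtension

section JordanBlockFactorization

variable {F : Type*} [Field F] {k : ℕ}

/-- Prepending two coordinates to a vector, in the order matching `chainExtension`: the summand
`(0, 0, 1)` becomes the first standard basis vector. -/
def vecConsTwoEquiv (F : Type*) [Field F] (k : ℕ) :
    ((Fin (k + 1) → F) × F × F) ≃ₗ[F] (Fin (k + 3) → F) where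
  toFun x := Matrix.vecCons x.2.2 (Matrix.vecCons x.2.1 x.1)
  invFun x := (fun i => x i.succ.succ, x 1, x 0)
  left_inv _ := rfl
  right_inv x := funext <| Fin.cases rfl <| Fin.cases rfl fun _ => rfl
  map_add' x y := by simp
  map_smul' c x := by simp

theorem conj_vecConsTwoEquiv_chainExtension :
    (vecConsTwoEquiv F k).conj (chainExtension (jordanBlock F k) (Pi.single 0 1)) =
      jordanBlock F (k + 2) := by
  refine LinearMap.ext fun x => funext fun i => ?_
  cases i using Fin.cases with
  | zero => rfl
  | succ i =>
    cases i using Fin.cases with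
    | zero => rfl
    | succ i =>
      cases i using Fin.cases with
      | zero =>
        change jordanBlock F k (fun i => x i.succ.succ) 0 + x 1 • (1 : F) = x 1
        simp
      | succ i =>
        change x i.castSucc.succ.succ + x 1 • (0 : F) = x i.castSucc.succ.succ
        simp

theorem HasExtendableFactorization.jordanBlock_add_two
    (h : HasExtendableFactorization (jordanBlock F k) (Pi.single 0 1)) :
    HasExtendableFactorization (jordanBlock F (k + 2)) (Pi.single 0 1) := by
  have h' := h.chainExtension.conj (vecConsTwoEquiv F k)
  rw [conj_vecConsTwoEquiv_chainExtension] at h'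
  convert h' using 1
  refine funext fun i => ?_
  cases i using Fin.cases with
  | zero => rfl
  | succ i =>
    cases i using Fin.cases with
    | zero => rfl
    | succ i => rfl

open Matrix in
theorem hasExtendableFactorization_toLin' {A B : Matrix (Fin (k + 1)) (Fin (k + 1)) F}
    {e ψ : Fin (k + 1) → F} (hA : IsNilpotent A) (hB : IsNilpotent B) (he : A *ᵥ e = 0)
    (hψ : ψ ᵥ* B = 0) (hψe : ψ ⬝ᵥ e = 1) (hA₀ : ∀ j, A 0 j = 0) (he₀ : e 0 = 0) (hψ₀ : ψ 0 = 0)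
    (hB₀ : ∀ i, (B ^ (i + 1)) 0 0 = 0) :
    HasExtendableFactorization (toLin' (A * B)) (Pi.single 0 1) := by
  refine ⟨toLin' A, toLin' B, e, dotProductBilin F F ψ, .proj 0, ⟨⟨?_, ?_, ?_, ?_, ?_, ?_⟩,
    ?_, ?_, ?_, ?_, fun i => ?_⟩⟩
  · exact hA.map toLinAlgEquiv'
  · exact hB.map toLinAlgEquiv'
  · exact toLin'_mul A B
  · exact he
  · refine LinearMap.ext fun x => ?_
    simp [dotProduct_mulVec, hψ]
  · exact hψe
  · refine LinearMap.ext fun x => ?_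
    simp [mulVec, hA₀]
  · simp
  · exact he₀
  · simpa using hψ₀
  · simpa [← toLin'_pow] using hB₀ i

theorem hasExtendableFactorization_jordanBlock_two :
    HasExtendableFactorization (jordanBlock F 2) (Pi.single 0 1) := by
  let A : Matrix (Fin 3) (Fin 3) F := !![0, 0, 0; 0, 0, 1; 1, 0, 0]
  let B : Matrix (Fin 3) (Fin 3) F := !![0, 1, 0; 0, 0, 0; 1, 0, 0]
  have hA : A ^ 3 = 0 := by ext i j; fin_cases i <;> fin_cases j <;> simp [A, pow_succ]
  have hB : B ^ 3 = 0 := by ext i j; fin_cases i <;> fin_cases j <;> simp [B, pow_succ]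
  have hAB : jordanBlock F 2 = Matrix.toLin' (A * B) := LinearMap.ext fun x => by
    ext i; fin_cases i <;> simp [A, B, jordanBlock, Fin.cons] <;> rfl
  rw [hAB]
  refine hasExtendableFactorization_toLin' (e := ![0, 1, 0]) (ψ := ![0, 1, 0])
    ⟨3, hA⟩ ⟨3, hB⟩ ?_ ?_ ?_ ?_ rfl rfl ?_
  · ext i; fin_cases i <;> simp [A, Matrix.vecHead, Matrix.vecTail]
  · simp [B]
  · simp
  · intro j; fin_cases j <;> rfl
  · rintro (_ | _ | i)
    · simp [B]
    · simp [B, pow_succ]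
    · rw [pow_add B i 3, hB, mul_zero, Matrix.zero_apply]

theorem hasExtendableFactorization_jordanBlock_three :
    HasExtendableFactorization (jordanBlock F 3) (Pi.single 0 1) := by
  let A : Matrix (Fin 4) (Fin 4) F := !![0, 0, 0, 0; 1, 1, -1, 0; 0, 1, -1, 1; -1, 0, 0, 0]
  let B : Matrix (Fin 4) (Fin 4) F := !![0, 0, -1, 0; 1, 0, 1, 0; 0, 0, 0, 0; -1, 1, -1, 0]
  have hA : A ^ 4 = 0 := by ext i j; fin_cases i <;> fin_cases j <;> simp [A, pow_succ]
  have hB : B ^ 4 = 0 := by ext i j; fin_cases i <;> fin_cases j <;> simp [B, pow_succ]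
  have hAB : jordanBlock F 3 = Matrix.toLin' (A * B) := LinearMap.ext fun x => by
    ext i; fin_cases i <;> simp [A, B, jordanBlock, Fin.cons] <;> rfl
  rw [hAB]
  refine hasExtendableFactorization_toLin' (e := ![0, 1, 1, 0]) (ψ := ![0, 0, 1, 0])
    ⟨4, hA⟩ ⟨4, hB⟩ ?_ ?_ ?_ ?_ rfl rfl ?_
  · ext i; fin_cases i <;> simp [A, Matrix.vecHead, Matrix.vecTail]
  · simp [B]
  · simp
  · intro j; fin_cases j <;> rfl
  · rintro (_ | _ | _ | i)
    · simp [B]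
    · simp [B, pow_succ]
    · simp [B, pow_succ]
    · rw [pow_add B i 4, hB, mul_zero, Matrix.zero_apply]

theorem hasExtendableFactorization_jordanBlock_add_two (k : ℕ) :
    HasExtendableFactorization (jordanBlock F (k + 2)) (Pi.single 0 1) := by
  induction k using Nat.twoStepInduction with
  | zero => exact hasExtendableFactorization_jordanBlock_two
  | one => exact hasExtendableFactorization_jordanBlock_three
  | more k ih _ => exact ih.jordanBlock_add_two

theorem isSquareZeroRankOne_jordanBlock_one : IsSquareZeroRankOne (jordanBlock F 1) := by
  refine ⟨.proj 0, Pi.single 1 1, fun h => ?_, by simp, by simp, LinearMap.ext fun x => ?_⟩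
  · simpa using LinearMap.congr_fun h (Pi.single 0 1)
  · ext i
    fin_cases i <;> simp
    · rfl

theorem hasNilpotentFactorization_jordanBlock_or (k : ℕ) :
    HasNilpotentFactorization (jordanBlock F k) ∨
      k = 1 ∧ IsSquareZeroRankOne (jordanBlock F k) :=
  match k with
  | 0 => .inl <| by
      rw [jordanBlock_zero]
      exact hasNilpotentFactorization_zero
  | 1 => .inr ⟨rfl, isSquareZeroRankOne_jordanBlock_one⟩
  | k + 2 => .inl (hasExtendableFactorization_jordanBlock_add_two k).hasNilpotentFactorization

end JordanBlockFactorization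

section Dichotomy

variable {F : Type*} [Field F]

theorem hasNilpotentFactorization_or_isSquareZeroRankOne {V : Type*} [AddCommGroup V] [Module F V]
    [FiniteDimensional F V] [Nontrivial V] {N : End F V} (hN : IsNilpotent N) :
    HasNilpotentFactorization N ∨ finrank F V = 2 ∧ IsSquareZeroRankOne N := by
  induction hn : finrank F V using Nat.strong_induction_on generalizing V with
  | _ n ih =>
    obtain ⟨k, U, hU, T, hT⟩ := exists_conj_jordanBlock_prodMap_eq hN
    have hdim : k + 1 + finrank F U = n := by simpa [hn] using T.finrank_eq
    rw [← hT]
    rcases subsingleton_or_nontrivial U with _ | _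
    · have : Unique U := uniqueOfSubsingleton 0
      have hdimU : finrank F U = 0 := finrank_zero_of_subsingleton
      have hprod : (LinearEquiv.prodUnique (R := F) (M₂ := U)).symm.conj (jordanBlock F k) =
          (jordanBlock F k).prodMap (N.restrict hU) :=
        LinearMap.ext fun x => Prod.ext rfl (Subsingleton.elim _ _)
      rw [← hprod]
      rcases hasNilpotentFactorization_jordanBlock_or (F := F) k with h | ⟨rfl, h⟩
      · exact .inl ((h.conj _).conj T)
      · exact .inr ⟨by omega, (h.conj _).conj T⟩
    · left
      have hrestrict : IsNilpotent (N.restrict hU) := End.isNilpotent.restrict hU hN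
      refine HasNilpotentFactorization.conj ?_ T
      rcases hasNilpotentFactorization_jordanBlock_or (F := F) k with hJ | ⟨-, hJ⟩ <;>
      rcases ih _ (by omega) hrestrict rfl with hR | ⟨-, hR⟩
      · exact hJ.prodMap hR
      · exact (hR.prodMap_hasNilpotentFactorization hJ).conj (LinearEquiv.prodComm F U _)
      · exact hJ.prodMap_hasNilpotentFactorization hR
      · exact hJ.prodMap hR

end Dichotomy

section MatrixForm

variable {F V : Type*} [Field F] [AddCommGroup V] [Module F V]

theorem basis_coord_eq_iff {ι : Type*} [DecidableEq ι] (b : Basis ι F V) {i : ι} {φ : Dual F V} :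
    b.coord i = φ ↔ ∀ j, φ (b j) = if j = i then 1 else 0 := by
  refine ⟨?_, fun h => b.ext fun j => ?_⟩
  · rintro rfl j
    rw [b.coord_apply, b.repr_self_apply]
  · rw [b.coord_apply, b.repr_self_apply, h]

theorem exists_basis_coord_zero_eq {n : ℕ} (hV : finrank F V = n + 1)
    {φ : Dual F V} (hφ : φ ≠ 0) : ∃ b : Basis (Fin (n + 1)) F V, b.coord 0 = φ := by
  have : FiniteDimensional F V := .of_finrank_pos (by omega)
  obtain ⟨y, hy⟩ : ∃ y, φ y = 1 := LinearMap.surjective hφ 1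
  have hker : finrank F (LinearMap.ker φ) = n := by
    have := Dual.finrank_ker_add_one_of_ne_zero hφ
    omega
  let b := Basis.mkFinCons y (finBasisOfFinrankEq F _ hker)
    (fun c x hx h => by simpa [hy, LinearMap.mem_ker.1 hx] using congr_arg φ h)
    (fun z => ⟨-φ z, by simp [hy]⟩)
  exact ⟨b, (basis_coord_eq_iff b).2 <| Fin.cases (by simp [b, hy]) fun i => by simp [b]⟩

theorem exists_basis_coord_zero_eq_coord_last_eq {m : ℕ}
    (hV : finrank F V = m + 2) {φ ψ : Dual F V} {e : V} (hφ : φ ≠ 0) (hφe : φ e = 0)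
    (hψe : ψ e = 1) :
    ∃ b : Basis (Fin (m + 2)) F V,
      b (Fin.last _) = e ∧ b.coord 0 = φ ∧ b.coord (Fin.last _) = ψ := by
  have : FiniteDimensional F V := .of_finrank_pos (by omega)
  have hψ : ψ ≠ 0 := fun h => by simp [h] at hψe
  have hker : finrank F (LinearMap.ker ψ) = m + 1 := by
    have := Dual.finrank_ker_add_one_of_ne_zero hψ
    omega
  have hφker : φ ∘ₗ (LinearMap.ker ψ).subtype ≠ 0 := fun h => hφ <| LinearMap.ext fun x => by
    simpa [hφe] using LinearMap.congr_fun h ⟨x - ψ x • e, by simp [hψe]⟩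
  obtain ⟨c, hc⟩ := exists_basis_coord_zero_eq hker hφker
  have hφc (i : Fin (m + 1)) : φ (c i) = if i = 0 then 1 else 0 := (basis_coord_eq_iff c).1 hc i
  let b := Basis.mkFinSnoc c e
    (fun a x hx h => by simpa [hψe, LinearMap.mem_ker.1 hx] using congr_arg ψ h)
    (fun z => ⟨-ψ z, by simp [hψe]⟩)
  refine ⟨b, by simp [b], (basis_coord_eq_iff b).2 <| Fin.lastCases ?_ fun i => ?_,
    (basis_coord_eq_iff b).2 <| Fin.lastCases ?_ fun i => ?_⟩
  · simp [b, hφe]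
  · simp [b, hφc]
  · simp [b, hψe]
  · simp [b, (Fin.castSucc_lt_last i).ne]

theorem exists_isUnit_inv_mul_mul_eq_toMatrix {ι : Type*} [Fintype ι] [DecidableEq ι]
    (b : Basis ι F (ι → F)) (N : Matrix ι ι F) :
    ∃ S : Matrix ι ι F, IsUnit S ∧ S⁻¹ * N * S = LinearMap.toMatrix b b N.toLin' := by
  let b₀ := Pi.basisFun F ι
  have hinv : b.toMatrix b₀ * b₀.toMatrix b = 1 := b.toMatrix_mul_toMatrix_flip b₀
  refine ⟨b₀.toMatrix b, .of_mul_eq_one_right _ hinv, ?_⟩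
  rw [Matrix.inv_eq_left_inv hinv,
    ← basis_toMatrix_mul_linearMap_toMatrix_mul_basis_toMatrix b b₀ b b₀,
    ← Matrix.toLin_eq_toLin', LinearMap.toMatrix_toLin]

theorem HasNilpotentFactorization.exists_similar_matrix_mul {m : ℕ}
    {N : Matrix (Fin (m + 2)) (Fin (m + 2)) F} (h : HasNilpotentFactorization N.toLin') :
    ∃ N₁ N₂ S : Matrix (Fin (m + 2)) (Fin (m + 2)) F,
      IsNilpotent N₁ ∧ IsNilpotent N₂ ∧ IsUnit S ∧ S⁻¹ * N * S = N₁ * N₂ ∧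
      (∀ j, N₁ 0 j = 0) ∧ (∀ i, N₁ i (Fin.last _) = 0) ∧ ∀ j, N₂ (Fin.last _) j = 0 := by
  obtain ⟨A, B, e, ψ, h⟩ := h
  obtain ⟨φ, hφ, hφA, hφe⟩ := exists_dual_ne_zero_comp_eq_zero_apply_eq_zero (by simp)
    h.isNilpotent_left h.left_apply_e
  obtain ⟨b, hb, hb₀, hbl⟩ :=
    exists_basis_coord_zero_eq_coord_last_eq (finrank_fin_fun F) hφ hφe h.psi_apply_e
  obtain ⟨S, hS, hSN⟩ := exists_isUnit_inv_mul_mul_eq_toMatrix b N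
  refine ⟨LinearMap.toMatrix b b A, LinearMap.toMatrix b b B, S,
    h.isNilpotent_left.map (LinearMap.toMatrixAlgEquiv b),
    h.isNilpotent_right.map (LinearMap.toMatrixAlgEquiv b), hS, ?_, fun j => ?_, fun i => ?_,
    fun j => ?_⟩
  · rw [hSN, h.eq_mul, LinearMap.toMatrix_mul]
  · rw [LinearMap.toMatrix_apply, ← b.coord_apply, hb₀]
    exact LinearMap.congr_fun hφA _
  · rw [LinearMap.toMatrix_apply, hb, h.left_apply_e, map_zero, Finsupp.zero_apply]
  · rw [LinearMap.toMatrix_apply, ← b.coord_apply, hbl]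
    exact LinearMap.congr_fun h.psi_comp_right _

end MatrixForm

theorem nilpotent_similar_to_structured_product_general
    (F : Type*) [Field F] (n : ℕ) (hn : 0 < n) (hn2 : n ≠ 2)
    (N : Matrix (Fin n) (Fin n) F) (hN : IsNilpotent N) :
    ∃ (N₁ N₂ S : Matrix (Fin n) (Fin n) F),
      IsNilpotent N₁ ∧ IsNilpotent N₂ ∧
      IsUnit S ∧ S⁻¹ * N * S = N₁ * N₂ ∧
      (∀ j, N₁ ⟨0, hn⟩ j = 0) ∧
      (∀ i, N₁ i ⟨n - 1, Nat.sub_one_lt hn.ne'⟩ = 0) ∧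
      ∀ j, N₂ ⟨n - 1, Nat.sub_one_lt hn.ne'⟩ j = 0 := by
  obtain rfl | ⟨m, rfl⟩ : n = 1 ∨ ∃ m, n = m + 2 := by
    rcases n with _ | _ | m <;> simp at hn ⊢
  · have htrace : N.trace = 0 := (Matrix.isNilpotent_trace_of_isNilpotent hN).eq_zero
    have hzero : N = 0 := by
      ext i j
      rwa [Subsingleton.elim i 0, Subsingleton.elim j 0, Matrix.zero_apply,
        ← Matrix.trace_fin_one N]
    exact ⟨0, 0, 1, .zero, .zero, isUnit_one, by simp [hzero], by simp, by simp, by simp⟩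
  · have hlin : IsNilpotent N.toLin' := N.isNilpotent_toLin'_iff.2 hN
    rcases hasNilpotentFactorization_or_isSquareZeroRankOne hlin with h | ⟨hdim, -⟩
    · exact h.exists_similar_matrix_mul
    · exact absurd (by simpa using hdim) hn2

/-- **Lemma.** For `n ≠ 2`, every nilpotent `n × n` matrix `N` over a field is similar
to a product `N₁ * N₂` of two nilpotent matrices, where the first row and the last
column of `N₁` are zero, and the last row of `N₂` is either zero or equals `e₁ᵀ`. -/
theorem nilpotent_similar_to_structured_product
    (F : Type*) [Field F] (n : ℕ) (hn : 0 < n) (hn2 : n ≠ 2)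
    (N : Matrix (Fin n) (Fin n) F) (hN : IsNilpotent N) :
    ∃ (N₁ N₂ S : Matrix (Fin n) (Fin n) F),
      IsNilpotent N₁ ∧ IsNilpotent N₂ ∧
      IsUnit S ∧ S⁻¹ * N * S = N₁ * N₂ ∧
      (∀ j, N₁ ⟨0, hn⟩ j = 0) ∧
      (∀ i, N₁ i ⟨n - 1, by omega⟩ = 0) ∧
      ((∀ j, N₂ ⟨n - 1, by omega⟩ j = 0) ∨
        (∀ j : Fin n, N₂ ⟨n - 1, by omega⟩ j = if (j : ℕ) = 0 then 1 else 0)) := by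
  obtain ⟨N₁, N₂, S, h₁, h₂, hS, hmul, hrow, hcol, hlast⟩ :=
    nilpotent_similar_to_structured_product_general F n hn hn2 N hN
  exact ⟨N₁, N₂, S, h₁, h₂, hS, hmul, hrow, hcol, .inl hlast⟩
end

section
/- Let F be a field and k an odd integer with k ≥ 3. Then the k×k Jordan block J_k(0) is similar over F to a product N₁N₂ of two nilpotent k×k matrices, where the first row and the last column of N₁ are both zero and the last row of N₂ is zero. -/
/-!
Index rows and columns by the cyclic group `Fin k` and let `T a c` be the permutation matrix of
`j ↦ j + a` with row `c` replaced by zero. Then `J_k(0) = T 1 0`, and `T 1 0 * T 1 (-1) = T 2 0`,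
because erasing row `-1` before shifting by `1` erases row `0` after it. Since `k` is odd, doubling
is an automorphism of `Fin k`; as a relabelling of the basis it turns `T 1 0` into `T 2 0`. Each
`T 1 c` is nilpotent because erasing row `c` cuts the `k`-cycle `j ↦ j + 1` into a path.
-/

section Matrix

variable {n R : Type*} [Fintype n] [DecidableEq n] [Semiring R]

theorem isNilpotent_of_apply_ne_zero_imp_lt (A : Matrix n n R) (r : n → ℕ)
    (hA : ∀ i j, A i j ≠ 0 → r j < r i) : IsNilpotent A := by
  have add_le_of_pow_ne_zero (m : ℕ) : ∀ i j, (A ^ m) i j ≠ 0 → r j + m ≤ r i := by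
    induction m with
    | zero =>
      intro i j h
      obtain rfl : i = j := by
        by_contra hij
        exact h (by rw [pow_zero, Matrix.one_apply_ne hij])
      exact le_rfl
    | succ m ih =>
      intro i j h
      rw [pow_succ, Matrix.mul_apply] at h
      obtain ⟨l, -, hl⟩ := Finset.exists_ne_zero_of_sum_ne_zero h
      have hil := ih i l (left_ne_zero_of_mul hl)
      have hlj := hA l j (right_ne_zero_of_mul hl)
      omega
  refine ⟨Finset.univ.sup r + 1, Matrix.ext fun i j => ?_⟩
  by_contra h
  have hij := add_le_of_pow_ne_zero _ i j h
  have hi : r i ≤ Finset.univ.sup r := Finset.le_sup (Finset.mem_univ i)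
  omega

theorem isConj_submatrix_perm (A : Matrix n n R) (σ : Equiv.Perm n) :
    IsConj A (A.submatrix σ σ) := by
  refine ⟨Units.map Matrix.permMatrixHom (toUnits σ⁻¹), ?_⟩
  simp only [SemiconjBy, Units.coe_map, val_toUnits_apply, Matrix.permMatrixHom_apply,
    inv_inv, Equiv.Perm.permMatrix, PEquiv.toMatrix_toPEquiv_mul,
    PEquiv.mul_toMatrix_toPEquiv, Matrix.submatrix_submatrix, Equiv.self_comp_symm,
    Function.comp_id]

end Matrix

theorem exists_isUnit_inv_mul_mul_eq_of_isConj {n R : Type*} [Fintype n] [DecidableEq n]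
    [CommRing R] {A B : Matrix n n R} (h : IsConj A B) : ∃ S, IsUnit S ∧ S⁻¹ * A * S = B := by
  obtain ⟨c, hc⟩ := h.symm
  exact ⟨c, c.isUnit, by
    rw [← Matrix.coe_units_inv, mul_assoc, ← hc.eq, Units.inv_mul_cancel_left]⟩

/-- The permutation matrix of the translation `j ↦ j + a`, with row `c` replaced by zero. -/
def truncatedShift (R : Type*) [Zero R] [One R] {G : Type*} [Add G] [DecidableEq G] (a c : G) :
    Matrix G G R :=
  Matrix.of fun i j => if i = j + a ∧ i ≠ c then 1 else 0

section TruncatedShift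

variable (R : Type*) {G : Type*} [DecidableEq G]

theorem truncatedShift_apply_self [Zero R] [One R] [Add G] (a c j : G) :
    truncatedShift R a c c j = 0 :=
  if_neg fun h => h.2 rfl

theorem truncatedShift_zero_apply_neg [Zero R] [One R] [AddGroup G] (a i : G) :
    truncatedShift R a 0 i (-a) = 0 :=
  if_neg fun h => h.2 (h.1.trans (neg_add_cancel a))

theorem truncatedShift_mul [Semiring R] [AddSemigroup G] [IsRightCancelAdd G] [Fintype G]
    (a b d : G) :
    truncatedShift R a (d + a) * truncatedShift R b d = truncatedShift R (b + a) (d + a) := by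
  ext i j
  rw [Matrix.mul_apply, Finset.sum_eq_single (j + b)]
  · simp only [truncatedShift, Matrix.of_apply, ← ite_and, mul_ite, mul_one, mul_zero, ← add_assoc]
    refine if_congr ?_ rfl rfl
    constructor
    · rintro ⟨-, h⟩
      exact h
    · rintro ⟨rfl, h⟩
      exact ⟨⟨trivial, fun e => h (by rw [e])⟩, rfl, h⟩
  · intro l _ hl
    simp [truncatedShift, hl]
  · simp

theorem isConj_truncatedShift_map [Semiring R] [Add G] [Fintype G] (σ : G ≃+ G) (a c : G) :
    IsConj (truncatedShift R a c) (truncatedShift R (σ a) (σ c)) := by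
  have relabel : (truncatedShift R (σ a) (σ c)).submatrix σ σ = truncatedShift R a c := by
    ext i j
    simp [truncatedShift, ← map_add]
  rw [← relabel]
  exact (isConj_submatrix_perm _ σ.toEquiv).symm

theorem isConj_truncatedShift_mul_of_odd_card [Semiring R] [AddCommGroup G] [Fintype G]
    (hG : Odd (Nat.card G)) (a : G) :
    IsConj (truncatedShift R a 0) (truncatedShift R a 0 * truncatedShift R a (-a)) := by
  let doubling : G ≃+ G := AddEquiv.ofBijective (nsmulAddMonoidHom 2)
    hG.coprime_two_right.nsmul_right_bijective
  have product : truncatedShift R a 0 * truncatedShift R a (-a) =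
      truncatedShift R (doubling a) (doubling 0) := by
    rw [map_zero, show doubling a = a + a from two_nsmul a]
    simpa only [neg_add_cancel] using truncatedShift_mul R a a (-a)
  rw [product]
  exact isConj_truncatedShift_map R doubling a 0

end TruncatedShift

section Fin

variable (R : Type*) {k : ℕ} [NeZero k]

theorem fin_eq_add_one_and_ne_zero_iff (i j : Fin k) :
    i = j + 1 ∧ i ≠ 0 ↔ (i : ℕ) = j + 1 := by
  obtain ⟨m, rfl⟩ := Nat.exists_eq_succ_of_ne_zero (NeZero.ne k)
  have hi := i.isLt
  simp only [Fin.ext_iff, Fin.val_add_one, Fin.val_zero, Fin.val_last, ne_eq]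
  split_ifs <;> omega

theorem fin_pred_eq_neg_one : (⟨k - 1, Nat.sub_one_lt (NeZero.ne k)⟩ : Fin k) = -1 := by
  obtain ⟨m, rfl⟩ := Nat.exists_eq_succ_of_ne_zero (NeZero.ne k)
  exact Fin.ext Fin.coe_neg_one.symm

theorem truncatedShift_one_zero_eq [Zero R] [One R] :
    truncatedShift R (1 : Fin k) 0 =
      Matrix.of fun i j : Fin k => if (i : ℕ) = j + 1 then 1 else 0 := by
  ext i j
  exact if_congr (fin_eq_add_one_and_ne_zero_iff i j) rfl rfl

theorem isNilpotent_truncatedShift_one [Semiring R] (c : Fin k) :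
    IsNilpotent (truncatedShift R 1 c) := by
  refine isNilpotent_of_apply_ne_zero_imp_lt _ (fun i => ((i - c : Fin k) : ℕ)) fun i j h => ?_
  obtain ⟨hij, hic⟩ : i = j + 1 ∧ i ≠ c := by
    by_contra hne
    exact h (if_neg hne)
  have := (fin_eq_add_one_and_ne_zero_iff (i - c) (j - c)).1
    ⟨by rw [hij, add_sub_right_comm], sub_ne_zero.2 hic⟩
  omega

end Fin

theorem jordan_block_odd_similar_to_structured_product_general
    (R : Type*) [Semiring R] {k : ℕ} (hodd : Odd k) :
    ∃ N₁ N₂ : Matrix (Fin k) (Fin k) R,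
      IsNilpotent N₁ ∧ IsNilpotent N₂ ∧
      IsConj (Matrix.of fun i j : Fin k => if (i : ℕ) = j + 1 then 1 else 0) (N₁ * N₂) ∧
      (∀ j, N₁ ⟨0, hodd.pos⟩ j = 0) ∧
      (∀ i, N₁ i ⟨k - 1, Nat.sub_one_lt_of_lt hodd.pos⟩ = 0) ∧
      (∀ j, N₂ ⟨k - 1, Nat.sub_one_lt_of_lt hodd.pos⟩ j = 0) := by
  have : NeZero k := ⟨hodd.pos.ne'⟩
  rw [fin_pred_eq_neg_one, ← truncatedShift_one_zero_eq]
  exact ⟨truncatedShift R 1 0, truncatedShift R 1 (-1), isNilpotent_truncatedShift_one R 0,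
    isNilpotent_truncatedShift_one R (-1),
    isConj_truncatedShift_mul_of_odd_card R (by rwa [Nat.card_fin]) 1,
    truncatedShift_apply_self R 1 0, truncatedShift_zero_apply_neg R 1,
    truncatedShift_apply_self R 1 (-1)⟩

/-- For odd `k ≥ 3`, the Jordan block `J_k(0)` is similar to a product `N₁ * N₂` of two
nilpotent matrices, where the first row and last column of `N₁` are zero and the last
row of `N₂` is zero. -/
theorem jordan_block_odd_similar_to_structured_product
    (F : Type*) [Field F] (k : ℕ) (hk : 3 ≤ k) (hodd : Odd k) :
    ∃ (N₁ N₂ S : Matrix (Fin k) (Fin k) F),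
      IsNilpotent N₁ ∧ IsNilpotent N₂ ∧
      IsUnit S ∧ S⁻¹ * jordanBlock0 F k * S = N₁ * N₂ ∧
      (∀ j, N₁ ⟨0, by omega⟩ j = 0) ∧
      (∀ i, N₁ i ⟨k - 1, by omega⟩ = 0) ∧
      (∀ j, N₂ ⟨k - 1, by omega⟩ j = 0) := by
  obtain ⟨N₁, N₂, hN₁, hN₂, hconj, hzero⟩ :=
    jordan_block_odd_similar_to_structured_product_general F hodd
  obtain ⟨S, hS, hSim⟩ := exists_isUnit_inv_mul_mul_eq_of_isConj hconj
  exact ⟨N₁, N₂, S, hN₁, hN₂, hS, hSim, hzero⟩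
end

section
/- Let F be a field and k an even integer with k ≥ 4. Then the k×k Jordan block J_k(0) is similar over F to a product N₁N₂ of two nilpotent k×k matrices, where the first row and the last column of N₁ are both zero and the last row of N₂ equals e₁ᵀ (the row vector with a one in the first entry and zeros elsewhere). -/
/-!
Write `e_0, …, e_{k-1}` for the standard basis and take `N₁ = J_k(0)`. Let `N₂` lower indices by
two, corrected at both ends: `e_0 ↦ e_{k-2} + e_{k-1}`, `e_1 ↦ 0`, `e_{k-1} ↦ e_{k-3} - e_{k-4}`.

The product `N₁ * N₂` then lowers indices by one, with `e_0 ↦ e_{k-1} ↦ e_{k-2} - e_{k-3}` and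
`e_1 ↦ 0`. Hence it is nilpotent, and its range together with `e_0` spans the whole space, so the
powers of `N₁ * N₂` applied to `e_0` form a basis, in which its matrix is a single Jordan block.

As `k` is even, `N₂` acts along the single chain
`e_{k-2} ↦ e_{k-4} ↦ ⋯ ↦ e_0 ↦ e_{k-2} + e_{k-1} ↦ e_{k-3} ↦ ⋯ ↦ e_1 ↦ 0`,
where the term `-e_{k-4}` of `N₂ e_{k-1}` is what keeps the even indices from closing up to a cycle.
-/

open Matrix Module

section JordanChain

theorem isNilpotent_of_forall_comap_le {R M : Type*} [CommRing R] [AddCommGroup M] [Module R M]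
    [Module.Finite R M] {f : End R M} (h : ∀ W : Submodule R M, W.comap f ≤ W → W = ⊤) :
    IsNilpotent f := by
  have htop : f.maxGenEigenspace 0 = ⊤ := h _ fun x hx => by
    obtain ⟨n, hn⟩ := (End.mem_maxGenEigenspace f 0 (f x)).1 hx
    exact (End.mem_maxGenEigenspace f 0 x).2 ⟨n + 1, by simpa [pow_succ] using hn⟩
  refine End.isNilpotent_iff_of_finite.2 fun x => ?_
  simpa using (End.mem_maxGenEigenspace f 0 x).1 (htop ▸ Submodule.mem_top)

theorem span_pow_apply_sup_range_pow_eq_top {R M : Type*} [Semiring R] [AddCommMonoid M]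
    [Module R M] {f : End R M} {v : M}
    (hv : Submodule.span R {v} ⊔ LinearMap.range f = ⊤) (n : ℕ) :
    Submodule.span R (Set.range fun i : Fin n => (f ^ (i : ℕ)) v) ⊔ LinearMap.range (f ^ n) =
      ⊤ := by
  induction n with
  | zero => simp [End.one_eq_id]
  | succ n ih =>
    have hrange : LinearMap.range (f ^ n) =
        Submodule.span R {(f ^ n) v} ⊔ LinearMap.range (f ^ (n + 1)) := by
      rw [LinearMap.range_eq_map, ← hv, Submodule.map_sup, LinearMap.map_span, Set.image_singleton,
        ← LinearMap.range_comp, ← End.mul_eq_comp, pow_succ]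
    have hinsert : (Set.range fun i : Fin (n + 1) => (f ^ (i : ℕ)) v) =
        insert ((f ^ n) v) (Set.range fun i : Fin n => (f ^ (i : ℕ)) v) := by
      ext x
      simp [Fin.exists_fin_succ', eq_comm, or_comm]
    rw [hinsert, Submodule.span_insert, sup_right_comm, ← hrange, sup_comm, ih]

variable {K V : Type*} [Field K] [AddCommGroup V] [Module K V] {n : ℕ} {f : End K V} {v : V}

theorem pow_finrank_eq_zero_of_isNilpotent [FiniteDimensional K V] (hf : IsNilpotent f) :
    f ^ finrank K V = 0 := by
  obtain ⟨m, hm⟩ := hf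
  rw [← LinearMap.ker_eq_top, eq_top_iff, ← LinearMap.ker_eq_top.2 hm]
  exact End.ker_pow_le_ker_pow_finrank f m

theorem exists_basis_eq_pow_apply [FiniteDimensional K V] (hn : finrank K V = n)
    (hf : IsNilpotent f) (hv : Submodule.span K {v} ⊔ LinearMap.range f = ⊤) :
    ∃ b : Basis (Fin n) K V, ∀ i, b i = (f ^ (i : ℕ)) v := by
  have hspan := span_pow_apply_sup_range_pow_eq_top hv n
  rw [← hn, pow_finrank_eq_zero_of_isNilpotent hf, hn, LinearMap.range_zero, sup_bot_eq] at hspan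
  exact ⟨basisOfTopLeSpanOfCardEqFinrank _ hspan.ge (by simp [hn]), by simp⟩

theorem toMatrix_eq_jordanBlock0_of_eq_pow_apply (b : Basis (Fin n) K V)
    (hb : ∀ i, b i = (f ^ (i : ℕ)) v) (hv : (f ^ n) v = 0) :
    LinearMap.toMatrix b b f = jordanBlock0 K n := by
  ext i j
  have hfb : f (b j) = (f ^ ((j : ℕ) + 1)) v := by rw [hb, pow_succ', End.mul_apply]
  rw [LinearMap.toMatrix_apply, hfb]
  obtain hj | hj : (j : ℕ) + 1 < n ∨ (j : ℕ) + 1 = n := by omega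
  · rw [← hb ⟨j + 1, hj⟩, Basis.repr_self]
    simp [jordanBlock0, Finsupp.single_apply, Fin.ext_iff, eq_comm]
  · have hij : (i : ℕ) ≠ (j : ℕ) + 1 := by omega
    simp [jordanBlock0, hj ▸ hv, hij]

theorem exists_isUnit_inv_mul_jordanBlock0_mul_eq {A : Matrix (Fin n) (Fin n) K}
    (hA : IsNilpotent A) {v : Fin n → K}
    (hv : Submodule.span K {v} ⊔ LinearMap.range A.toLin' = ⊤) :
    ∃ S : Matrix (Fin n) (Fin n) K, IsUnit S ∧ S⁻¹ * jordanBlock0 K n * S = A := by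
  have hA' : IsNilpotent A.toLin' := (isNilpotent_toLin'_iff A).2 hA
  obtain ⟨b, hb⟩ := exists_basis_eq_pow_apply (finrank_fin_fun K) hA' hv
  have hpow : A.toLin' ^ n = 0 := by
    simpa only [finrank_fin_fun] using pow_finrank_eq_zero_of_isNilpotent hA'
  have hn : (A.toLin' ^ n) v = 0 := by rw [hpow, LinearMap.zero_apply]
  have hinv : (Pi.basisFun K (Fin n)).toMatrix b * b.toMatrix (Pi.basisFun K (Fin n)) = 1 :=
    Basis.toMatrix_mul_toMatrix_flip _ _
  refine ⟨b.toMatrix (Pi.basisFun K (Fin n)), IsUnit.of_mul_eq_one_right _ hinv, ?_⟩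
  rw [inv_eq_left_inv hinv, ← toMatrix_eq_jordanBlock0_of_eq_pow_apply b hb hn,
    basis_toMatrix_mul_linearMap_toMatrix_mul_basis_toMatrix]
  exact LinearMap.toMatrix'_toLin' A

end JordanChain

section StdVec

variable {R : Type*} {k : ℕ}

/-- The standard basis vector of `Fin k → R` with index `n`, read as `0` when `k ≤ n`, so that
a shift of basis vectors needs no separate boundary case. -/
def stdVec (R : Type*) [Zero R] [One R] (k n : ℕ) : Fin k → R :=
  fun i => if (i : ℕ) = n then 1 else 0

theorem stdVec_of_le [Zero R] [One R] {n : ℕ} (h : k ≤ n) : stdVec R k n = 0 := by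
  funext i
  exact if_neg (by omega)

theorem stdVec_val [Zero R] [One R] (j : Fin k) : stdVec R k j = Pi.single j 1 := by
  funext i
  simp [stdVec, Pi.single_apply, Fin.ext_iff]

theorem mulVec_stdVec_val [NonAssocSemiring R] (A : Matrix (Fin k) (Fin k) R) (j : Fin k) :
    A *ᵥ stdVec R k j = A.col j := by
  rw [stdVec_val, mulVec_single_one]

theorem eq_top_of_stdVec_mem [Semiring R] (W : Submodule R (Fin k → R))
    (h : ∀ n < k, stdVec R k n ∈ W) : W = ⊤ := by
  rw [eq_top_iff, ← (Pi.basisFun R (Fin k)).span_eq, Submodule.span_le]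
  rintro _ ⟨j, rfl⟩
  simpa [stdVec_val] using h j j.isLt

theorem isNilpotent_of_stdVec_mem [CommRing R] {A : Matrix (Fin k) (Fin k) R}
    (h : ∀ W : Submodule R (Fin k → R), (∀ x, A *ᵥ x ∈ W → x ∈ W) → ∀ n < k, stdVec R k n ∈ W) :
    IsNilpotent A :=
  (isNilpotent_toLin'_iff A).1 <| isNilpotent_of_forall_comap_le fun W hW =>
    eq_top_of_stdVec_mem W (h W fun _ hx => hW hx)

end StdVec

theorem jordanBlock0_mulVec_stdVec (F : Type*) [Field F] (k n : ℕ) :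
    jordanBlock0 F k *ᵥ stdVec F k n = stdVec F k (n + 1) := by
  obtain h | h := lt_or_ge n k
  · exact mulVec_stdVec_val _ ⟨n, h⟩
  · rw [stdVec_of_le h, stdVec_of_le (h.trans n.le_succ), mulVec_zero]

theorem isNilpotent_jordanBlock0 (F : Type*) [Field F] (k : ℕ) :
    IsNilpotent (jordanBlock0 F k) := by
  refine isNilpotent_of_stdVec_mem fun W hW n hn => ?_
  replace hn := hn.le
  induction hn using Nat.decreasingInduction with
  | self => simp [stdVec_of_le]
  | of_succ n _ ih => exact hW _ (jordanBlock0_mulVec_stdVec F k n ▸ ih)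

/-- The nilpotent right factor `N₂`, of size `m + 4`: on the standard basis it acts by
`e₀ ↦ e_{m+2} + e_{m+3}`, `e₁ ↦ 0`, `e_{n+2} ↦ e_n` for `n ≤ m`, and `e_{m+3} ↦ e_{m+1} - e_m`. -/
def rightFactor (R : Type*) [Ring R] (m : ℕ) : Matrix (Fin (m + 4)) (Fin (m + 4)) R :=
  Matrix.of fun i j =>
    (match (j : ℕ) with
    | 0 => stdVec R (m + 4) (m + 2) + stdVec R (m + 4) (m + 3)
    | 1 => 0
    | n + 2 =>
      if n = m + 1 then stdVec R (m + 4) (m + 1) - stdVec R (m + 4) m else stdVec R (m + 4) n) i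

section RightFactor

variable (R : Type*) [Ring R] (m : ℕ)

theorem rightFactor_mulVec_stdVec_zero :
    rightFactor R m *ᵥ stdVec R (m + 4) 0 = stdVec R (m + 4) (m + 2) + stdVec R (m + 4) (m + 3) :=
  mulVec_stdVec_val _ 0

theorem rightFactor_mulVec_stdVec_one : rightFactor R m *ᵥ stdVec R (m + 4) 1 = 0 :=
  mulVec_stdVec_val _ 1

theorem rightFactor_mulVec_stdVec_add_two {n : ℕ} (hn : n ≤ m) :
    rightFactor R m *ᵥ stdVec R (m + 4) (n + 2) = stdVec R (m + 4) n :=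
  (mulVec_stdVec_val _ ⟨n + 2, by omega⟩).trans (if_neg (by omega))

theorem rightFactor_mulVec_stdVec_last :
    rightFactor R m *ᵥ stdVec R (m + 4) (m + 3) =
      stdVec R (m + 4) (m + 1) - stdVec R (m + 4) m :=
  (mulVec_stdVec_val _ (Fin.last (m + 3))).trans (if_pos rfl)

theorem rightFactor_last_apply (j : Fin (m + 4)) :
    rightFactor R m (Fin.last (m + 3)) j = if (j : ℕ) = 0 then 1 else 0 := by
  obtain ⟨_ | _ | n, hn⟩ := j
  · simp [rightFactor, stdVec]
  · simp [rightFactor]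
  · have hne : m + 3 ≠ n := by omega
    simp only [rightFactor, of_apply]
    split_ifs <;> simp_all [stdVec]

end RightFactor

theorem isNilpotent_rightFactor (R : Type*) [CommRing R] {m : ℕ} (hm : Even m) :
    IsNilpotent (rightFactor R m) := by
  obtain ⟨p, rfl⟩ := hm.two_dvd
  refine isNilpotent_of_stdVec_mem fun W hW => ?_
  have hstep {n : ℕ} (hn : n ≤ 2 * p) (h : stdVec R (2 * p + 4) n ∈ W) :
      stdVec R (2 * p + 4) (n + 2) ∈ W :=
    hW _ (rightFactor_mulVec_stdVec_add_two R (2 * p) hn ▸ h)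
  have hodd {c : ℕ} (hc : c ≤ p) : stdVec R (2 * p + 4) (2 * c + 1) ∈ W := by
    induction c with
    | zero => exact hW _ (rightFactor_mulVec_stdVec_one R (2 * p) ▸ W.zero_mem)
    | succ c ih => exact hstep (n := 2 * c + 1) (by omega) (ih (by omega))
  have hsum : stdVec R (2 * p + 4) (2 * p + 2) + stdVec R (2 * p + 4) (2 * p + 3) ∈ W := by
    apply hW
    rw [mulVec_add, rightFactor_mulVec_stdVec_add_two R (2 * p) le_rfl,
      rightFactor_mulVec_stdVec_last, add_sub_cancel]
    exact hodd le_rfl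
  have heven {c : ℕ} (hc : c ≤ p + 1) : stdVec R (2 * p + 4) (2 * c) ∈ W := by
    induction c with
    | zero => exact hW _ (rightFactor_mulVec_stdVec_zero R (2 * p) ▸ hsum)
    | succ c ih => exact hstep (n := 2 * c) (by omega) (ih (by omega))
  have hlast : stdVec R (2 * p + 4) (2 * p + 3) ∈ W :=
    (W.add_mem_iff_right (heven le_rfl)).1 hsum
  intro n hn
  obtain ⟨c, rfl | rfl⟩ := n.even_or_odd'
  · exact heven (by omega)
  obtain rfl | hc : c = p + 1 ∨ c ≤ p := by omega
  · exact hlast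
  · exact hodd hc

section Product

variable (F : Type*) [Field F] (m : ℕ)

/-- The product `N₁ * N₂`, with `J_{m+4}(0)` itself as the left factor `N₁`. -/
def factorProduct : Matrix (Fin (m + 4)) (Fin (m + 4)) F :=
  jordanBlock0 F (m + 4) * rightFactor F m

theorem factorProduct_mulVec_stdVec_zero :
    factorProduct F m *ᵥ stdVec F (m + 4) 0 = stdVec F (m + 4) (m + 3) := by
  rw [factorProduct, ← mulVec_mulVec, rightFactor_mulVec_stdVec_zero, mulVec_add,
    jordanBlock0_mulVec_stdVec, jordanBlock0_mulVec_stdVec, stdVec_of_le (n := m + 3 + 1) le_rfl,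
    add_zero]

theorem factorProduct_mulVec_stdVec_one : factorProduct F m *ᵥ stdVec F (m + 4) 1 = 0 := by
  rw [factorProduct, ← mulVec_mulVec, rightFactor_mulVec_stdVec_one, mulVec_zero]

theorem factorProduct_mulVec_stdVec_add_two {n : ℕ} (hn : n ≤ m) :
    factorProduct F m *ᵥ stdVec F (m + 4) (n + 2) = stdVec F (m + 4) (n + 1) := by
  rw [factorProduct, ← mulVec_mulVec, rightFactor_mulVec_stdVec_add_two F m hn,
    jordanBlock0_mulVec_stdVec]

theorem factorProduct_mulVec_stdVec_last :
    factorProduct F m *ᵥ stdVec F (m + 4) (m + 3) =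
      stdVec F (m + 4) (m + 2) - stdVec F (m + 4) (m + 1) := by
  rw [factorProduct, ← mulVec_mulVec, rightFactor_mulVec_stdVec_last, mulVec_sub,
    jordanBlock0_mulVec_stdVec, jordanBlock0_mulVec_stdVec]

theorem isNilpotent_factorProduct : IsNilpotent (factorProduct F m) := by
  refine isNilpotent_of_stdVec_mem fun W hW => ?_
  have hmid (n : ℕ) (hn : n ≤ m + 1) : stdVec F (m + 4) (n + 1) ∈ W := by
    induction n with
    | zero => exact hW _ (factorProduct_mulVec_stdVec_one F m ▸ W.zero_mem)
    | succ n ih =>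
      exact hW _ (factorProduct_mulVec_stdVec_add_two F m (n := n) (by omega) ▸ ih (by omega))
  have hlast : stdVec F (m + 4) (m + 3) ∈ W :=
    hW _ (factorProduct_mulVec_stdVec_last F m ▸
      W.sub_mem (hmid (m + 1) le_rfl) (hmid m (by omega)))
  have hzero : stdVec F (m + 4) 0 ∈ W := hW _ (factorProduct_mulVec_stdVec_zero F m ▸ hlast)
  rintro (_ | n) hn
  · exact hzero
  obtain rfl | hn' : n = m + 2 ∨ n ≤ m + 1 := by omega
  · exact hlast
  · exact hmid n hn'

theorem span_stdVec_zero_sup_range_factorProduct_eq_top :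
    Submodule.span F {stdVec F (m + 4) 0} ⊔ LinearMap.range (factorProduct F m).toLin' = ⊤ := by
  set W := Submodule.span F {stdVec F (m + 4) 0} ⊔ LinearMap.range (factorProduct F m).toLin'
  have himage (x : Fin (m + 4) → F) : factorProduct F m *ᵥ x ∈ W :=
    Submodule.mem_sup_right ⟨x, rfl⟩
  have hmid {n : ℕ} (hn : n ≤ m) : stdVec F (m + 4) (n + 1) ∈ W :=
    factorProduct_mulVec_stdVec_add_two F m hn ▸ himage (stdVec F (m + 4) (n + 2))
  have hpenultimate : stdVec F (m + 4) (m + 2) ∈ W :=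
    (W.sub_mem_iff_left (hmid le_rfl)).1 (factorProduct_mulVec_stdVec_last F m ▸ himage _)
  have hlast : stdVec F (m + 4) (m + 3) ∈ W := factorProduct_mulVec_stdVec_zero F m ▸ himage _
  refine eq_top_of_stdVec_mem W ?_
  rintro (_ | n) hn
  · exact Submodule.mem_sup_left (Submodule.mem_span_singleton_self _)
  obtain rfl | rfl | hn' : n = m + 1 ∨ n = m + 2 ∨ n ≤ m := by omega
  · exact hpenultimate
  · exact hlast
  · exact hmid hn'

end Product

/-- For even `k ≥ 4`, the Jordan block `J_k(0)` is similar to a product `N₁ * N₂` of two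
nilpotent matrices, where the first row and last column of `N₁` are zero and the last
row of `N₂` equals `e₁ᵀ`. -/
theorem jordan_block_even_similar_to_structured_product
    (F : Type*) [Field F] (k : ℕ) (hk : 4 ≤ k) (heven : Even k) :
    ∃ (N₁ N₂ S : Matrix (Fin k) (Fin k) F),
      IsNilpotent N₁ ∧ IsNilpotent N₂ ∧
      IsUnit S ∧ S⁻¹ * jordanBlock0 F k * S = N₁ * N₂ ∧
      (∀ j, N₁ ⟨0, by omega⟩ j = 0) ∧
      (∀ i, N₁ i ⟨k - 1, by omega⟩ = 0) ∧
      (∀ j : Fin k, N₂ ⟨k - 1, by omega⟩ j = if (j : ℕ) = 0 then 1 else 0) := by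
  obtain ⟨m, rfl⟩ := Nat.exists_eq_add_of_le' hk
  have hm : Even m := by simpa [Nat.even_add, show Even 4 by decide] using heven
  obtain ⟨S, hS, hSJ⟩ := exists_isUnit_inv_mul_jordanBlock0_mul_eq (isNilpotent_factorProduct F m)
    (span_stdVec_zero_sup_range_factorProduct_eq_top F m)
  refine ⟨jordanBlock0 F (m + 4), rightFactor F m, S, isNilpotent_jordanBlock0 F (m + 4),
    isNilpotent_rightFactor F hm, hS, hSJ, fun j => ?first_row, fun i => ?last_column,
    rightFactor_last_apply F m⟩
  case first_row => simp [jordanBlock0]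
  case last_column => simp [jordanBlock0, i.isLt.ne]
end

section
/- Let F be a field and k an even integer with k ≥ 2. Then the (k+2)×(k+2) block diagonal matrix Dg[J_k(0), J_2(0)] is a product N₁N₂ of two nilpotent (k+2)×(k+2) matrices over F, where the first row and the last column of N₁ are both zero and the last row of N₂ is zero. -/
/-!
Write `P_φ` for the matrix sending `e_j` to `e_{φ j}`, or to `0` if `φ j` is out of range, and let
`S = P_{j ↦ j + 1}`. For injective `φ` the product `P_φᵀ P_φ` is the diagonal projection onto the
`e_j` with `φ j` in range, so `(S P_φᵀ) P_φ` is the Jordan block `S` with the other columns erased.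
In size `k + 2`, erasing column `k - 1` of `S` leaves `Dg[J_k(0), J_2(0)]`.

It remains to choose `φ` so that `k - 1` is the only `j ≤ k` pushed out of range and neither
`j ↦ φ j` nor `φ j ↦ j + 1` has a cycle. The map `0 ↦ 2 ↦ 1 ↦ 4 ↦ 3 ↦ 6 ↦ 5 ↦ ⋯` does this for all
even `k ≥ 2` at once: the second map is then `⋯ ↦ 6 ↦ 4 ↦ 2 ↦ 1 ↦ 3 ↦ 5 ↦ ⋯`.
-/

open Matrix

theorem isNilpotent_of_forall_apply_ne_zero_lt {ι α R : Type*} [Fintype ι] [DecidableEq ι]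
    [Preorder α] [Semiring R] {N : Matrix ι ι R} (r : ι → α)
    (hN : ∀ i j, N i j ≠ 0 → r j < r i) : IsNilpotent N := by
  classical
  have le_card_of_pow_ne_zero (m : ℕ) (i j : ι) (h : (N ^ m) i j ≠ 0) :
      m ≤ Finset.card {l | r l < r i} := by
    induction m generalizing i with
    | zero => exact Nat.zero_le _
    | succ m ih =>
      rw [pow_succ', mul_apply] at h
      obtain ⟨l, -, hl⟩ := Finset.exists_ne_zero_of_sum_ne_zero h
      have hli : r l < r i := hN i l (left_ne_zero_of_mul hl)
      refine (ih l (right_ne_zero_of_mul hl)).trans_lt (Finset.card_lt_card ?_)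
      refine (Finset.ssubset_iff_of_subset fun x hx => ?_).2 ⟨l, by simpa using hli, by simp⟩
      simp only [Finset.mem_filter_univ] at hx ⊢
      exact hx.trans hli
  refine ⟨Fintype.card ι + 1, ext fun i j => of_not_not fun h => ?_⟩
  exact (Finset.card_le_univ _).not_gt (le_card_of_pow_ne_zero _ i j h)

section truncMapMatrix

/-- The `n × n` truncation of the matrix of a map `φ : ℕ → ℕ`: column `j` is the basis vector
`e_{φ j}`, or zero when `φ j ≥ n`. For `φ = (· + 1)` it is the nilpotent Jordan block. -/
def truncMapMatrix (R : Type*) [Zero R] [One R] (n : ℕ) (φ : ℕ → ℕ) : Matrix (Fin n) (Fin n) R :=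
  of fun i j => if (i : ℕ) = φ j then 1 else 0

theorem eq_of_truncMapMatrix_apply_ne_zero {R : Type*} [Zero R] [One R] {n : ℕ} {φ : ℕ → ℕ}
    {i j : Fin n} (h : truncMapMatrix R n φ i j ≠ 0) : (i : ℕ) = φ j :=
  of_not_not fun hij => h (if_neg hij)

theorem reindex_fromBlocks_truncMapMatrix_add_one (R : Type*) [Zero R] [One R] (m n : ℕ) :
    reindex finSumFinEquiv finSumFinEquiv
        (fromBlocks (truncMapMatrix R m (· + 1)) 0 0 (truncMapMatrix R n (· + 1))) =
      of fun i j : Fin (m + n) => if (i : ℕ) = j + 1 ∧ (j : ℕ) + 1 ≠ m then 1 else 0 := by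
  rw [← Equiv.eq_symm_apply]
  ext (i | i) (j | j) <;>
    simp only [truncMapMatrix, fromBlocks_apply₁₁, fromBlocks_apply₁₂, fromBlocks_apply₂₁,
      fromBlocks_apply₂₂, reindex_symm, reindex_apply, submatrix_apply, Equiv.symm_symm,
      finSumFinEquiv_apply_left, finSumFinEquiv_apply_right, Fin.val_castAdd, Fin.val_natAdd,
      of_apply, Matrix.zero_apply] <;>
    grind

variable {R : Type*} [Semiring R] {n : ℕ} {φ ψ : ℕ → ℕ}

theorem exists_of_truncMapMatrix_mul_transpose_apply_ne_zero {i l : Fin n}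
    (h : (truncMapMatrix R n ψ * (truncMapMatrix R n φ)ᵀ) i l ≠ 0) :
    ∃ j : Fin n, (i : ℕ) = ψ j ∧ (l : ℕ) = φ j := by
  rw [mul_apply] at h
  obtain ⟨j, -, hj⟩ := Finset.exists_ne_zero_of_sum_ne_zero h
  exact ⟨j, eq_of_truncMapMatrix_apply_ne_zero (left_ne_zero_of_mul hj),
    eq_of_truncMapMatrix_apply_ne_zero (right_ne_zero_of_mul hj)⟩

theorem isNilpotent_truncMapMatrix {α : Type*} [Preorder α] (r : ℕ → α)
    (hr : ∀ j, r j < r (φ j)) : IsNilpotent (truncMapMatrix R n φ) :=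
  isNilpotent_of_forall_apply_ne_zero_lt (fun i : Fin n => r i) fun _ j hij =>
    eq_of_truncMapMatrix_apply_ne_zero hij ▸ hr j

theorem isNilpotent_truncMapMatrix_mul_transpose {α : Type*} [Preorder α] (r : ℕ → α)
    (hr : ∀ j, r (φ j) < r (ψ j)) :
    IsNilpotent (truncMapMatrix R n ψ * (truncMapMatrix R n φ)ᵀ) := by
  refine isNilpotent_of_forall_apply_ne_zero_lt (fun i : Fin n => r i) fun i l hil => ?_
  obtain ⟨j, hi, hl⟩ := exists_of_truncMapMatrix_mul_transpose_apply_ne_zero hil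
  rw [hi, hl]
  exact hr j

theorem transpose_truncMapMatrix_mul_self (hφ : φ.Injective) :
    (truncMapMatrix R n φ)ᵀ * truncMapMatrix R n φ =
      diagonal fun j : Fin n => if φ j < n then 1 else 0 := by
  ext i j
  simp only [mul_apply, transpose_apply, truncMapMatrix, of_apply, diagonal_apply,
    ← ite_and, mul_ite, mul_one, mul_zero]
  by_cases h : i = j ∧ φ i < n
  · obtain ⟨rfl, hi⟩ := h
    rw [Finset.sum_eq_single ⟨φ i, hi⟩] <;> grind
  · rw [if_neg h]
    refine Finset.sum_eq_zero fun l _ => if_neg fun ⟨hj, hi⟩ => h ?_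
    exact ⟨Fin.ext (hφ (hi.symm.trans hj)), hi ▸ l.isLt⟩

theorem truncMapMatrix_mul_transpose_mul_self (hφ : φ.Injective) :
    truncMapMatrix R n ψ * (truncMapMatrix R n φ)ᵀ * truncMapMatrix R n φ =
      of fun i j : Fin n => if (i : ℕ) = ψ j ∧ φ j < n then 1 else 0 := by
  ext i j
  rw [Matrix.mul_assoc, transpose_truncMapMatrix_mul_self hφ, mul_diagonal]
  simp only [truncMapMatrix, of_apply, mul_ite, mul_one, mul_zero, ← ite_and, and_comm]

end truncMapMatrix

/-- The map `0 ↦ 2 ↦ 1 ↦ 4 ↦ 3 ↦ 6 ↦ 5 ↦ ⋯` on `ℕ`, through which the step `j ↦ j + 1` of a Jordan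
block is factored. -/
def zigzag (j : ℕ) : ℕ :=
  if j = 0 then 2 else if Even j then j - 1 else j + 3

theorem zigzag_injective : zigzag.Injective := by
  intro i j h
  grind [zigzag]

theorem zigzag_lt_iff {k j : ℕ} (hk : 2 ≤ k) (heven : Even k) (hj : j ≤ k) :
    zigzag j < k + 2 ↔ j + 1 ≠ k := by
  grind [zigzag]

theorem zigzag_ne_add_one {k j : ℕ} (heven : Even k) (hj : j < k + 2) : zigzag j ≠ k + 1 := by
  grind [zigzag]

theorem isNilpotent_truncMapMatrix_zigzag (R : Type*) [Semiring R] (n : ℕ) :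
    IsNilpotent (truncMapMatrix R n zigzag) :=
  isNilpotent_truncMapMatrix (fun i => if Even i then i else i + 2) fun j => by grind [zigzag]

theorem isNilpotent_truncMapMatrix_add_one_mul_transpose_zigzag (R : Type*) [Semiring R] (n : ℕ) :
    IsNilpotent (truncMapMatrix R n (· + 1) * (truncMapMatrix R n zigzag)ᵀ) :=
  isNilpotent_truncMapMatrix_mul_transpose (fun i => if Even i then -(i : ℤ) else i) fun j => by
    grind [zigzag]

theorem fromBlocks_eq_truncMapMatrix_mul_zigzag (R : Type*) [Semiring R] {k : ℕ} (hk : 2 ≤ k)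
    (heven : Even k) :
    reindex finSumFinEquiv finSumFinEquiv
        (fromBlocks (truncMapMatrix R k (· + 1)) 0 0 (truncMapMatrix R 2 (· + 1))) =
      truncMapMatrix R (k + 2) (· + 1) * (truncMapMatrix R (k + 2) zigzag)ᵀ *
        truncMapMatrix R (k + 2) zigzag := by
  rw [reindex_fromBlocks_truncMapMatrix_add_one,
    truncMapMatrix_mul_transpose_mul_self zigzag_injective]
  ext i j
  exact if_congr (and_congr_right fun hij => (zigzag_lt_iff hk heven (by omega)).symm) rfl rfl

theorem jordan_k_2_even_structured_product_general
    (R : Type*) [Semiring R] (k : ℕ) (hk : 2 ≤ k) (heven : Even k) :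
    ∃ N₁ N₂ : Matrix (Fin (k + 2)) (Fin (k + 2)) R,
      IsNilpotent N₁ ∧ IsNilpotent N₂ ∧
      reindex finSumFinEquiv finSumFinEquiv
          (fromBlocks (truncMapMatrix R k (· + 1)) 0 0 (truncMapMatrix R 2 (· + 1))) = N₁ * N₂ ∧
      (∀ j, N₁ 0 j = 0) ∧ (∀ i, N₁ i (Fin.last (k + 1)) = 0) ∧
      (∀ j, N₂ (Fin.last (k + 1)) j = 0) := by
  refine ⟨truncMapMatrix R (k + 2) (· + 1) * (truncMapMatrix R (k + 2) zigzag)ᵀ,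
    truncMapMatrix R (k + 2) zigzag,
    isNilpotent_truncMapMatrix_add_one_mul_transpose_zigzag R (k + 2),
    isNilpotent_truncMapMatrix_zigzag R (k + 2),
    fromBlocks_eq_truncMapMatrix_mul_zigzag R hk heven,
    fun _ => of_not_not fun h => ?_, fun _ => of_not_not fun h => ?_,
    fun j => of_not_not fun h => ?_⟩
  · obtain ⟨j, hj, -⟩ := exists_of_truncMapMatrix_mul_transpose_apply_ne_zero h
    exact Nat.succ_ne_zero j hj.symm
  · obtain ⟨j, -, hj⟩ := exists_of_truncMapMatrix_mul_transpose_apply_ne_zero h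
    exact zigzag_ne_add_one heven j.isLt hj.symm
  · exact zigzag_ne_add_one heven j.isLt (eq_of_truncMapMatrix_apply_ne_zero h).symm

/-- For even `k ≥ 2`, the block diagonal matrix `Dg[J_k(0), J_2(0)]` is a product
`N₁ * N₂` of two nilpotent matrices, where the first row and last column of `N₁` are
zero and the last row of `N₂` is zero. -/
theorem jordan_k_2_even_structured_product
    (F : Type*) [Field F] (k : ℕ) (hk : 2 ≤ k) (heven : Even k) :
    ∃ N₁ N₂ : Matrix (Fin (k + 2)) (Fin (k + 2)) F,
      IsNilpotent N₁ ∧ IsNilpotent N₂ ∧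
      Matrix.reindex finSumFinEquiv finSumFinEquiv
          (Matrix.fromBlocks (jordanBlock0 F k) 0 0 (jordanBlock0 F 2)) = N₁ * N₂ ∧
      (∀ j, N₁ ⟨0, by omega⟩ j = 0) ∧
      (∀ i, N₁ i ⟨k + 1, by omega⟩ = 0) ∧
      (∀ j, N₂ ⟨k + 1, by omega⟩ j = 0) :=
  jordan_k_2_even_structured_product_general F k hk heven
end

section
/- Let F be a field. The 6×6 block diagonal matrix Dg[J_2(0), J_2(0), J_2(0)] over F is similar to a product N₁N₂ of two nilpotent 6×6 matrices, where the first row and the last column of N₁ are both zero and the last row of N₂ is zero. -/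
/-!
Let `J_n` be the `n × n` nilpotent Jordan block. Its power `J_n ^ k` sends `e_j` to `e_{j+k}`, so
for `n = m * k` the residue classes modulo `k` split it into `k` Jordan blocks of size `m`: the
direct sum of `k` copies of `J_m` is similar, by a permutation matrix, to
`J_n ^ k = J_n ^ (k - 1) * J_n`. If `2 ≤ k`, the first row and the last column of `J_n ^ (k - 1)`
vanish; hence the last row of the second factor does not affect the product and may be replaced by
zero.
-/

open Matrix

section Triangular

variable {R ι : Type*} [CommRing R] [Fintype ι] [LinearOrder ι] {M : Matrix ι ι R}

theorem isNilpotent_of_isUpperTriangular_of_diag_eq_zero (hM : M.IsUpperTriangular)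
    (hdiag : ∀ i, M i i = 0) : IsNilpotent M := by
  have hchar : M.charpoly = Polynomial.X ^ Fintype.card ι := by
    simp [charpoly_of_isUpperTriangular M hM, hdiag]
  exact ⟨Fintype.card ι, by simpa [hchar] using aeval_self_charpoly M⟩

theorem isNilpotent_of_apply_eq_zero_of_le (hM : ∀ i j, i ≤ j → M i j = 0) : IsNilpotent M :=
  isNilpotent_transpose_iff.mp <| isNilpotent_of_isUpperTriangular_of_diag_eq_zero
    (fun i j hji ↦ hM j i (le_of_lt hji)) fun i ↦ hM i i le_rfl

end Triangular

theorem exists_isUnit_conj_reindex_eq_reindex {R ι κ : Type*} [CommRing R] [Fintype κ]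
    [DecidableEq κ] (e f : ι ≃ κ) (A : Matrix ι ι R) :
    ∃ S : Matrix κ κ R, IsUnit S ∧ S⁻¹ * reindex e e A * S = reindex f f A := by
  let σ : Equiv.Perm κ := e.symm.trans f
  have hinv : σ⁻¹.permMatrix R * σ.permMatrix R = 1 := by
    rw [← permMatrix_mul, mul_inv_cancel, permMatrix_one]
  refine ⟨σ.permMatrix R, .of_mul_eq_one_right _ hinv, ?_⟩
  rw [inv_eq_left_inv hinv, PEquiv.toMatrix_toPEquiv_mul, PEquiv.mul_toMatrix_toPEquiv]
  ext i j
  simp [σ]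

section JordanBlock

variable (R : Type*)

/-- The nilpotent Jordan block `J_n(0)`, with ones on the subdiagonal. -/
def nilpotentJordanBlock [Zero R] [One R] (n : ℕ) : Matrix (Fin n) (Fin n) R :=
  of fun i j ↦ if (i : ℕ) = j + 1 then 1 else 0

/-- The block diagonal matrix `Dg[J_m(0), …, J_m(0)]` with `k` blocks. The reindexing puts the
`a`-th coordinate of the `b`-th block at position `a + m * b`. -/
def nilpotentJordanBlockSum [Zero R] [One R] (m k : ℕ) : Matrix (Fin (m * k)) (Fin (m * k)) R :=
  let e : Fin m × Fin k ≃ Fin (m * k) :=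
    ((Equiv.prodComm _ _).trans finProdFinEquiv).trans (finCongr (mul_comm k m))
  reindex e e (blockDiagonal fun _ ↦ nilpotentJordanBlock R m)

theorem nilpotentJordanBlockSum_two_three [Zero R] [One R] :
    nilpotentJordanBlockSum R 2 3 = !![0,0,0,0,0,0;
                                       1,0,0,0,0,0;
                                       0,0,0,0,0,0;
                                       0,0,1,0,0,0;
                                       0,0,0,0,0,0;
                                       0,0,0,0,1,0] := by
  ext i j
  fin_cases i <;> fin_cases j <;> rfl

theorem nilpotentJordanBlock_apply [Zero R] [One R] {n : ℕ} (i j : Fin n) :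
    nilpotentJordanBlock R n i j = if (i : ℕ) = j + 1 then 1 else 0 := rfl

theorem nilpotentJordanBlock_pow_apply [Semiring R] {n : ℕ} (d : ℕ) (i j : Fin n) :
    (nilpotentJordanBlock R n ^ d) i j = if (i : ℕ) = j + d then 1 else 0 := by
  induction d generalizing j with
  | zero => simp [one_apply, Fin.ext_iff]
  | succ d ih =>
    simp only [pow_succ, mul_apply, ih, nilpotentJordanBlock_apply, mul_ite, mul_one, mul_zero]
    by_cases hj : (j : ℕ) + 1 < n
    · rw [Finset.sum_eq_single ⟨j + 1, hj⟩ (by grind) (by simp)]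
      grind
    · rw [Finset.sum_eq_zero (by grind), if_neg (by grind)]

theorem nilpotentJordanBlock_pow_eq_reindex_blockDiagonal [Semiring R] (m k : ℕ) :
    nilpotentJordanBlock R (m * k) ^ k =
      reindex finProdFinEquiv finProdFinEquiv
        (blockDiagonal fun _ : Fin k ↦ nilpotentJordanBlock R m) := by
  ext i j
  obtain ⟨⟨a, b⟩, rfl⟩ := finProdFinEquiv.surjective i
  obtain ⟨⟨c, d⟩, rfl⟩ := finProdFinEquiv.surjective j
  have hshift : (b + k * a : ℕ) = d + k * c + k ↔ b = d ∧ (a : ℕ) = c + 1 := by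
    refine ⟨fun h ↦ ?_, fun ⟨hbd, hac⟩ ↦ by rw [hbd, hac]; ring⟩
    have hbd : (b : ℕ) = d := by
      simpa [Nat.mod_eq_of_lt] using congrArg (· % k) h
    exact ⟨Fin.ext hbd, Nat.eq_of_mul_eq_mul_left b.pos (by linarith)⟩
  simp [nilpotentJordanBlock_pow_apply, blockDiagonal_apply, nilpotentJordanBlock_apply, hshift,
    ite_and]

theorem exists_isUnit_conj_nilpotentJordanBlockSum_eq_pow [CommRing R] (m k : ℕ) :
    ∃ S : Matrix (Fin (m * k)) (Fin (m * k)) R, IsUnit S ∧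
      S⁻¹ * nilpotentJordanBlockSum R m k * S = nilpotentJordanBlock R (m * k) ^ k := by
  rw [nilpotentJordanBlock_pow_eq_reindex_blockDiagonal]
  exact exists_isUnit_conj_reindex_eq_reindex _ _ _

theorem exists_nilpotent_factorization_nilpotentJordanBlock_pow [CommRing R] (n : ℕ) {k : ℕ}
    (hk : 2 ≤ k) :
    ∃ N₁ N₂ : Matrix (Fin n) (Fin n) R,
      IsNilpotent N₁ ∧ IsNilpotent N₂ ∧
      nilpotentJordanBlock R n ^ k = N₁ * N₂ ∧
      (∀ i j : Fin _, (i : ℕ) = 0 → N₁ i j = 0) ∧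
      (∀ i j : Fin _, (j : ℕ) + 1 = n → N₁ i j = 0) ∧
      (∀ i j : Fin _, (i : ℕ) + 1 = n → N₂ i j = 0) := by
  let J := nilpotentJordanBlock R n
  let P : Matrix (Fin n) (Fin n) R := diagonal fun i ↦ if (i : ℕ) + 1 = n then 0 else 1
  have hJ (d : ℕ) (i j : Fin n) : (i : ℕ) ≠ j + d → (J ^ d) i j = 0 := fun h ↦ by
    rw [nilpotentJordanBlock_pow_apply, if_neg h]
  have hlastCol (i j : Fin n) (hj : (j : ℕ) + 1 = n) : (J ^ (k - 1)) i j = 0 :=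
    hJ _ i j (by lia)
  have hmulP : J ^ (k - 1) * P = J ^ (k - 1) := by
    ext i j
    by_cases hj : (j : ℕ) + 1 = n <;> simp [P, hj, hlastCol]
  refine ⟨J ^ (k - 1), P * J, ?_, ?_, ?_, ?_, hlastCol, ?_⟩
  · exact isNilpotent_of_apply_eq_zero_of_le fun i j hij ↦ hJ _ i j (by lia)
  · refine isNilpotent_of_apply_eq_zero_of_le fun i j hij ↦ ?_
    rw [diagonal_mul, ← pow_one J, hJ 1 i j (by lia), mul_zero]
  · rw [← Matrix.mul_assoc, hmulP, pow_sub_one_mul (by lia)]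
  · exact fun i j hi ↦ hJ _ i j (by lia)
  · exact fun i j hi ↦ by simp [P, hi]

end JordanBlock

theorem j2_j2_j2_similar_to_structured_product_general (R : Type*) [CommRing R] (m : ℕ) {k : ℕ}
    (hk : 2 ≤ k) :
    ∃ N₁ N₂ S : Matrix (Fin (m * k)) (Fin (m * k)) R,
      IsNilpotent N₁ ∧ IsNilpotent N₂ ∧
      IsUnit S ∧
      S⁻¹ * nilpotentJordanBlockSum R m k * S = N₁ * N₂ ∧
      (∀ i j : Fin _, (i : ℕ) = 0 → N₁ i j = 0) ∧
      (∀ i j : Fin _, (j : ℕ) + 1 = m * k → N₁ i j = 0) ∧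
      (∀ i j : Fin _, (i : ℕ) + 1 = m * k → N₂ i j = 0) := by
  obtain ⟨S, hS, hconj⟩ := exists_isUnit_conj_nilpotentJordanBlockSum_eq_pow R m k
  obtain ⟨N₁, N₂, hN₁, hN₂, hmul, hzeros⟩ :=
    exists_nilpotent_factorization_nilpotentJordanBlock_pow R (m * k) hk
  exact ⟨N₁, N₂, S, hN₁, hN₂, hS, hconj.trans hmul, hzeros⟩

/-- The `6 × 6` block diagonal matrix `Dg[J_2(0), J_2(0), J_2(0)]` is similar to a
product `N₁ * N₂` of two nilpotent matrices, where the first row and last column of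
`N₁` are zero and the last row of `N₂` is zero. -/
theorem j2_j2_j2_similar_to_structured_product (F : Type*) [Field F] :
    ∃ (N₁ N₂ S : Matrix (Fin 6) (Fin 6) F),
      IsNilpotent N₁ ∧ IsNilpotent N₂ ∧
      IsUnit S ∧
      S⁻¹ * (!![0,0,0,0,0,0;
                 1,0,0,0,0,0;
                 0,0,0,0,0,0;
                 0,0,1,0,0,0;
                 0,0,0,0,0,0;
                 0,0,0,0,1,0] : Matrix (Fin 6) (Fin 6) F) * S = N₁ * N₂ ∧
      (∀ j, N₁ 0 j = 0) ∧
      (∀ i, N₁ i 5 = 0) ∧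
      (∀ j, N₂ 5 j = 0) := by
  obtain ⟨N₁, N₂, S, hN₁, hN₂, hS, hconj, hrow₁, hcol₁, hrow₂⟩ :=
    j2_j2_j2_similar_to_structured_product_general F 2 (k := 3) (by norm_num)
  exact ⟨N₁, N₂, S, hN₁, hN₂, hS, nilpotentJordanBlockSum_two_three F ▸ hconj,
    fun j ↦ hrow₁ 0 j rfl, fun i ↦ hcol₁ i 5 rfl, fun j ↦ hrow₂ 5 j rfl⟩
end
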